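/- arXiv:1802.02837 — 4 statements merged into one kernel-verified Lean document; each statement's English description precedes it below -/
import Mathlib

section
/- Let m ≥ n ≥ 1 be integers. For A ∈ Matrix (Fin m) (Fin n) ℝ let S(A) = {(X,Y) ∈ 𝔰𝔬(m) × 𝔰𝔬(n) : X·A = A·Y} and T(A) = {X·A − A·Y : X ∈ 𝔰𝔬(m), Y ∈ 𝔰𝔬(n)} (a linear subspace of the matrix space). Then the minimum over all A of dim_ℝ S(A) equals (m−n)(m−n−1)/2, and the maximum over all A of dim_ℝ T(A) equals mn − n. Equivalently, the action of SO(m)×SO(n) on m×n real matrices by (g,h)·A = g A hᵀ has principal isotropy groups of dimension dim SO(m−n) and cohomogeneity n. -/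
open Matrix

/-- `S(A) = {(X,Y) ∈ 𝔰𝔬(m) × 𝔰𝔬(n) : X·A = A·Y}`. -/
def stabSet0 {m n : ℕ} (A : Matrix (Fin m) (Fin n) ℝ) :
    Set (Matrix (Fin m) (Fin m) ℝ × Matrix (Fin n) (Fin n) ℝ) :=
  {p | p.1ᵀ = -p.1 ∧ p.2ᵀ = -p.2 ∧ p.1 * A = A * p.2}

/-- `T(A) = {X·A − A·Y : X ∈ 𝔰𝔬(m), Y ∈ 𝔰𝔬(n)}`. -/
def tangSet0 {m n : ℕ} (A : Matrix (Fin m) (Fin n) ℝ) :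
    Set (Matrix (Fin m) (Fin n) ℝ) :=
  {B | ∃ X : Matrix (Fin m) (Fin m) ℝ, ∃ Y : Matrix (Fin n) (Fin n) ℝ,
    Xᵀ = -X ∧ Yᵀ = -Y ∧ B = X * A - A * Y}

/-!
The isotropy algebra `S(A)` contains the skew-symmetric `X` with `X * A = 0`. These are the matrices
`U * Z * Uᵀ`, where the columns of `U` form a basis of the left kernel of `A` and `Z` is
skew-symmetric, so `dim S(A) ≥ dim 𝔰𝔬(m - rank A) ≥ dim 𝔰𝔬(m - n)`. Nothing else lies in `S(A)` when
`Aᵀ * A` is diagonal with distinct nonzero entries: `X * A = A * Y` makes `Aᵀ * A * Y = Aᵀ * X * A`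
skew-symmetric, i.e. `Y` commutes with `Aᵀ * A`, so `Y` is diagonal and skew-symmetric, hence zero.
As `T(A)` and `S(A)` are the image and the kernel of one linear map, rank-nullity gives the rest.
-/

open LieAlgebra.Orthogonal Module

theorem choose_two_add_choose_two {a b : ℕ} (h : b ≤ a) :
    a.choose 2 + b.choose 2 = (a * b - b) + (a - b).choose 2 := by
  obtain ⟨c, rfl⟩ := Nat.exists_eq_add_of_le h
  have hb : b ≤ (b + c) * b := by nlinarith [Nat.le_mul_self b]
  rw [Nat.add_sub_cancel_left]
  qify [hb]
  simp only [Nat.cast_choose_two]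
  push_cast
  ring

section SkewSymmetric

variable {ι R : Type*} [Fintype ι] [CommRing R]

theorem apply_eq_neg_of_mem_so [DecidableEq ι] {X : Matrix ι ι R} (hX : X ∈ so ι R) (i j : ι) :
    X j i = -X i j :=
  congr_fun₂ ((mem_so ι R X).1 hX) i j

theorem apply_self_eq_zero_of_mem_so [DecidableEq ι] [IsDomain R] [NeZero (2 : R)]
    {X : Matrix ι ι R} (hX : X ∈ so ι R) (i : ι) : X i i = 0 := by
  have h : 2 * X i i = 0 := by linear_combination apply_eq_neg_of_mem_so hX i i
  exact (mul_eq_zero.1 h).resolve_left two_ne_zero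

/-- A skew-symmetric matrix is determined by its entries strictly above the diagonal, which are
arbitrary. -/
def soEquivUpperEntries [LinearOrder ι] [IsDomain R] [NeZero (2 : R)] :
    so ι R ≃ₗ[R] ({p : ι × ι // p.1 < p.2} → R) where
  toFun X p := X.1 p.1.1 p.1.2
  map_add' _ _ := rfl
  map_smul' _ _ := rfl
  invFun f :=
    let U : Matrix ι ι R := of fun i j => if h : i < j then f ⟨(i, j), h⟩ else 0
    ⟨U - Uᵀ, by simp⟩
  left_inv X := by
    ext i j
    rcases lt_trichotomy i j with h | rfl | h
    · simp [h, h.not_gt]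
    · simp [apply_self_eq_zero_of_mem_so X.2]
    · simp [h, h.not_gt, apply_eq_neg_of_mem_so X.2 j i]
  right_inv f := by
    ext ⟨⟨i, j⟩, h⟩
    replace h : i < j := h
    simp [h, h.not_gt]

theorem finrank_so [DecidableEq ι] [IsDomain R] [NeZero (2 : R)] :
    finrank R (so ι R) = (Fintype.card ι).choose 2 := by
  let _ : LinearOrder ι := LinearOrder.lift' (Fintype.equivFin ι) (Fintype.equivFin ι).injective
  have h := (soEquivUpperEntries (ι := ι) (R := R)).finrank_eq
  rw [finrank_fintype_fun_eq_card, Fintype.card_subtype, ← Finset.univ_product_univ,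
    Finset.card_product_filter_lt, Finset.card_univ] at h
  convert h

theorem eq_zero_of_mem_so_of_commute_diagonal [DecidableEq ι] [IsDomain R] [NeZero (2 : R)]
    {Y : Matrix ι ι R} (hY : Y ∈ so ι R) {d : ι → R} (hd : Function.Injective d)
    (hdY : Commute (diagonal d) Y) : Y = 0 := by
  ext i j
  obtain rfl | hij := eq_or_ne i j
  · exact apply_self_eq_zero_of_mem_so hY i
  · have hentry : d i * Y i j = Y i j * d j := by
      simpa only [diagonal_mul, mul_diagonal] using congr_fun₂ hdY.eq i j
    have hprod : (d i - d j) * Y i j = 0 := by linear_combination hentry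
    exact (mul_eq_zero.1 hprod).resolve_left (sub_ne_zero.2 (hd.ne hij))

theorem commute_transpose_mul_self_of_mul_eq_mul {m n : Type*} [Fintype m] [Fintype n]
    [DecidableEq m] [DecidableEq n] {A : Matrix m n R} {X : Matrix m m R} {Y : Matrix n n R}
    (hX : X ∈ so m R) (hY : Y ∈ so n R) (hXY : X * A = A * Y) : Commute (Aᵀ * A) Y := by
  rw [mem_so] at hX hY
  have hAXA : Aᵀ * X * A = Aᵀ * A * Y := by rw [Matrix.mul_assoc, hXY, Matrix.mul_assoc]
  have htranspose : -(Aᵀ * X * A) = -(Y * (Aᵀ * A)) := by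
    simpa [hX, hY, Matrix.mul_assoc] using congrArg transpose hAXA
  exact hAXA.symm.trans (neg_injective htranspose)

end SkewSymmetric

theorem exists_ker_basis_matrix {l m K : Type*} [Fintype m] [Field K] (B : Matrix l m K) :
    ∃ (U : Matrix m (Fin (Fintype.card m - B.rank)) K)
      (L : Matrix (Fin (Fintype.card m - B.rank)) m K),
      L * U = 1 ∧ B * U = 0 ∧ ∀ v, B *ᵥ v = 0 → U *ᵥ (L *ᵥ v) = v := by
  classical
  let W := LinearMap.ker B.mulVecLin
  have hW : finrank K (Fin (Fintype.card m - B.rank) → K) = finrank K W := by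
    have h := LinearMap.finrank_range_add_finrank_ker B.mulVecLin
    rw [finrank_fintype_fun_eq_card] at h
    rw [finrank_fin_fun, Matrix.rank, ← h, Nat.add_sub_cancel_left]
  let e := LinearEquiv.ofFinrankEq _ W hW
  let f := W.subtype ∘ₗ e.toLinearMap
  have hf : LinearMap.ker f = ⊥ :=
    LinearMap.ker_eq_bot.2 (W.subtype_injective.comp e.injective)
  obtain ⟨g, hg⟩ := f.exists_leftInverse_of_injective hf
  refine ⟨f.toMatrix', g.toMatrix', ?_, ?_, fun v hv => ?_⟩
  · rw [← LinearMap.toMatrix'_comp, hg, LinearMap.toMatrix'_id]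
  · refine Matrix.ext_of_mulVec_single fun i => ?_
    rw [← mulVec_mulVec, LinearMap.toMatrix'_mulVec, zero_mulVec]
    exact (e _).2
  · obtain ⟨x, hx⟩ := e.surjective ⟨v, hv⟩
    obtain rfl : f x = v := congrArg Subtype.val hx
    rw [LinearMap.toMatrix'_mulVec, LinearMap.toMatrix'_mulVec]
    exact congrArg f (LinearMap.congr_fun hg x)

section Annihilator

attribute [local instance] LieRing.ofAssociativeRing

variable {m n p R : Type*} [Fintype m] [Fintype p] [DecidableEq m] [DecidableEq p] [CommRing R]

/-- The action `Z ↦ U * Z * Uᵀ` of a rectangular matrix on skew-symmetric matrices by congruence. -/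
def soCongruence (U : Matrix m p R) : so p R →ₗ[R] so m R where
  toFun Z := ⟨U * Z.1 * Uᵀ, by
    rw [mem_so, transpose_mul, transpose_mul, transpose_transpose, (mem_so _ _ _).1 Z.2,
      Matrix.neg_mul, Matrix.mul_neg, Matrix.mul_assoc]⟩
  map_add' Z Z' := by ext1; simp [Matrix.mul_add, Matrix.add_mul]
  map_smul' c Z := by ext1; simp

theorem coe_soCongruence (U : Matrix m p R) (Z : so p R) :
    (soCongruence U Z : Matrix m m R) = U * Z.1 * Uᵀ :=
  rfl

theorem soCongruence_soCongruence_of_mul_eq_one {U : Matrix m p R} {L : Matrix p m R}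
    (hLU : L * U = 1) (Z : so p R) : soCongruence L (soCongruence U Z) = Z := by
  ext1
  calc L * (U * Z.1 * Uᵀ) * Lᵀ = L * U * Z.1 * (L * U)ᵀ := by
        simp only [transpose_mul, Matrix.mul_assoc]
    _ = Z.1 := by rw [hLU, transpose_one, Matrix.one_mul, Matrix.mul_one]

/-- The skew-symmetric matrices `X` with `X * A = 0`: the infinitesimal isotropy of `A` under left
multiplication alone. -/
def skewAnnihilator (A : Matrix m n R) : Submodule R (so m R) :=
  LinearMap.ker (mulRightLinearMap m R A ∘ₗ (so m R).toSubmodule.subtype)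

theorem mem_skewAnnihilator {A : Matrix m n R} {X : so m R} :
    X ∈ skewAnnihilator A ↔ X.1 * A = 0 :=
  Iff.rfl

theorem range_soCongruence_eq_skewAnnihilator {A : Matrix m n R} {U : Matrix m p R}
    {L : Matrix p m R} (hAU : Aᵀ * U = 0) (hUL : ∀ v, Aᵀ *ᵥ v = 0 → U *ᵥ (L *ᵥ v) = v) :
    LinearMap.range (soCongruence U) = skewAnnihilator A := by
  have hUA : Uᵀ * A = 0 := by simpa using congrArg transpose hAU
  refine le_antisymm ?_ fun X hX => ⟨soCongruence L X, ?_⟩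
  · rintro _ ⟨Z, rfl⟩
    rw [mem_skewAnnihilator, coe_soCongruence, Matrix.mul_assoc, hUA, Matrix.mul_zero]
  · have hXt : X.1ᵀ = -X.1 := (mem_so _ _ _).1 X.2
    have hAX : Aᵀ * X.1 = 0 := by
      rw [← neg_eq_zero, ← Matrix.mul_neg, ← hXt, ← transpose_mul, mem_skewAnnihilator.1 hX,
        transpose_zero]
    have hULX : U * (L * X.1) = X.1 := Matrix.ext_of_mulVec_single fun i => by
      rw [← mulVec_mulVec, ← mulVec_mulVec]
      exact hUL _ (by rw [mulVec_mulVec, hAX, zero_mulVec])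
    have hXLU : X.1 * (Lᵀ * Uᵀ) = X.1 := by
      simpa [hXt, Matrix.mul_assoc] using congrArg transpose hULX
    ext1
    calc U * (L * X.1 * Lᵀ) * Uᵀ = U * (L * X.1) * (Lᵀ * Uᵀ) := by
          simp only [Matrix.mul_assoc]
      _ = X.1 := by rw [hULX, hXLU]

theorem finrank_skewAnnihilator {K : Type*} [Fintype n] [Field K] [NeZero (2 : K)]
    (A : Matrix m n K) :
    finrank K (skewAnnihilator A) = (Fintype.card m - A.rank).choose 2 := by
  obtain ⟨U, L, hLU, hAU, hUL⟩ := exists_ker_basis_matrix Aᵀ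
  have hU : Function.Injective (soCongruence U) :=
    Function.LeftInverse.injective (soCongruence_soCongruence_of_mul_eq_one hLU)
  rw [← range_soCongruence_eq_skewAnnihilator hAU hUL, LinearMap.finrank_range_of_inj hU,
    finrank_so, Fintype.card_fin, rank_transpose]

end Annihilator

theorem rank_eq_card_of_transpose_mul_self_eq_diagonal {m n K : Type*} [Fintype m]
    [Fintype n] [DecidableEq n] [Field K] {A : Matrix m n K} {d : n → K} (hA : Aᵀ * A = diagonal d)
    (hd : ∀ i, d i ≠ 0) : A.rank = Fintype.card n := by
  classical
  refine le_antisymm A.rank_le_card_width ?_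
  calc Fintype.card n = (diagonal d).rank := by simp [rank_diagonal, hd]
    _ ≤ A.rank := hA ▸ rank_mul_le_right Aᵀ A

section InfinitesimalAction

variable {m n R K : Type*} [Fintype m] [Fintype n] [DecidableEq m] [DecidableEq n] [CommRing R]
  [Field K]

/-- The differential at `A` of the orbit map of `(g, h) • A = g * A * hᵀ`: its range is the tangent
space of the orbit and its kernel is the infinitesimal stabilizer. -/
def infinitesimalAction (A : Matrix m n R) : so m R × so n R →ₗ[R] Matrix m n R where
  toFun p := p.1.1 * A - A * p.2.1
  map_add' p q := by
    simp only [Prod.fst_add, Prod.snd_add, AddMemClass.coe_add, Matrix.add_mul, Matrix.mul_add]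
    abel
  map_smul' c p := by simp [smul_sub]

theorem mem_ker_infinitesimalAction {A : Matrix m n R} {p : so m R × so n R} :
    p ∈ LinearMap.ker (infinitesimalAction A) ↔ p.1.1 * A = A * p.2.1 :=
  sub_eq_zero

theorem map_inl_skewAnnihilator_le_ker (A : Matrix m n R) :
    (skewAnnihilator A).map (LinearMap.inl R (so m R) (so n R)) ≤
      LinearMap.ker (infinitesimalAction A) := by
  rintro _ ⟨X, hX, rfl⟩
  rw [mem_ker_infinitesimalAction]
  simpa using mem_skewAnnihilator.1 hX

theorem finrank_map_inl_skewAnnihilator [NeZero (2 : K)] (A : Matrix m n K) :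
    finrank K ((skewAnnihilator A).map (LinearMap.inl K (so m K) (so n K))) =
      (Fintype.card m - A.rank).choose 2 := by
  rw [← (Submodule.equivMapOfInjective _ LinearMap.inl_injective _).finrank_eq,
    finrank_skewAnnihilator]

theorem choose_two_le_finrank_ker_infinitesimalAction [NeZero (2 : K)] (A : Matrix m n K) :
    (Fintype.card m - Fintype.card n).choose 2 ≤
      finrank K (LinearMap.ker (infinitesimalAction A)) :=
  calc (Fintype.card m - Fintype.card n).choose 2
      ≤ (Fintype.card m - A.rank).choose 2 :=
        Nat.choose_le_choose 2 (Nat.sub_le_sub_left A.rank_le_card_width _)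
    _ = finrank K ((skewAnnihilator A).map (LinearMap.inl K (so m K) (so n K))) :=
        (finrank_map_inl_skewAnnihilator A).symm
    _ ≤ finrank K (LinearMap.ker (infinitesimalAction A)) :=
        Submodule.finrank_mono (map_inl_skewAnnihilator_le_ker A)

variable {A : Matrix m n K} {d : n → K}

theorem ker_infinitesimalAction_of_transpose_mul_self_eq_diagonal [NeZero (2 : K)]
    (hA : Aᵀ * A = diagonal d) (hd : Function.Injective d) :
    LinearMap.ker (infinitesimalAction A) =
      (skewAnnihilator A).map (LinearMap.inl K (so m K) (so n K)) := by
  refine le_antisymm ?_ (map_inl_skewAnnihilator_le_ker A)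
  rintro ⟨X, Y⟩ hXY
  rw [mem_ker_infinitesimalAction] at hXY
  have hY : Y.1 = 0 := eq_zero_of_mem_so_of_commute_diagonal Y.2 hd
    (hA ▸ commute_transpose_mul_self_of_mul_eq_mul X.2 Y.2 hXY)
  refine ⟨X, mem_skewAnnihilator.2 ?_, Prod.ext rfl (Subtype.ext hY.symm)⟩
  rw [hXY, hY, Matrix.mul_zero]

theorem finrank_ker_infinitesimalAction_of_transpose_mul_self_eq_diagonal [NeZero (2 : K)]
    (hA : Aᵀ * A = diagonal d) (hd : Function.Injective d) (hd₀ : ∀ i, d i ≠ 0) :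
    finrank K (LinearMap.ker (infinitesimalAction A)) =
      (Fintype.card m - Fintype.card n).choose 2 := by
  rw [ker_infinitesimalAction_of_transpose_mul_self_eq_diagonal hA hd,
    finrank_map_inl_skewAnnihilator, rank_eq_card_of_transpose_mul_self_eq_diagonal hA hd₀]

theorem finrank_range_infinitesimalAction_add_finrank_ker [NeZero (2 : K)]
    (hmn : Fintype.card n ≤ Fintype.card m) (A : Matrix m n K) :
    finrank K (LinearMap.range (infinitesimalAction A)) +
        finrank K (LinearMap.ker (infinitesimalAction A)) =
      (Fintype.card m * Fintype.card n - Fintype.card n) +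
        (Fintype.card m - Fintype.card n).choose 2 := by
  rw [LinearMap.finrank_range_add_finrank_ker, finrank_prod, finrank_so, finrank_so,
    choose_two_add_choose_two hmn]

end InfinitesimalAction

theorem exists_transpose_mul_self_eq_diagonal_sq {m n R : Type*} [Fintype m] [Finite n]
    [DecidableEq n] [CommSemiring R] (f : n ↪ m) (c : n → R) :
    ∃ A : Matrix m n R, Aᵀ * A = diagonal fun j => c j ^ 2 := by
  classical
  have := Fintype.ofFinite n
  let P : Matrix m n R := submatrix 1 id f
  have hP : Pᵀ * P = 1 := by
    simp only [P, transpose_submatrix, transpose_one]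
    rw [← submatrix_mul 1 1 f id f Function.bijective_id, Matrix.one_mul,
      submatrix_one_embedding]
  refine ⟨P * diagonal c, ?_⟩
  calc (P * diagonal c)ᵀ * (P * diagonal c) = diagonal c * (Pᵀ * P) * diagonal c := by
        simp only [transpose_mul, diagonal_transpose, Matrix.mul_assoc]
    _ = diagonal fun j => c j ^ 2 := by
        simp only [hP, Matrix.mul_one, diagonal_mul_diagonal, sq]

theorem exists_injective_sq_and_sq_ne_zero (ι R : Type*) [Finite ι] [CommRing R] [IsDomain R]
    [Infinite R] :
    ∃ c : ι → R, Function.Injective (fun i => c i ^ 2) ∧ ∀ i, c i ^ 2 ≠ 0 := by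
  have hfiber (y : R) : ((· ^ 2) ⁻¹' {y} : Set R).Finite := by
    obtain h | ⟨x, rfl⟩ := ((· ^ 2) ⁻¹' {y} : Set R).eq_empty_or_nonempty
    · simp [h]
    · exact (Set.toFinite {x, -x}).subset fun z hz => sq_eq_sq_iff_eq_or_eq_neg.1 hz
  have hsq : (Set.range fun x : R => x ^ 2).Infinite := fun h =>
    Set.infinite_univ <| by simpa using h.preimage' fun y _ => hfiber y
  have := (hsq.sdiff (Set.finite_singleton 0)).to_subtype
  let e : ι ↪ ↥((Set.range fun x : R => x ^ 2) \ {0}) :=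
    (Finite.equivFin ι).toEmbedding.trans (Fin.valEmbedding.trans (Infinite.natEmbedding _))
  choose c hc using fun i => (e i).2.1
  have hc : ∀ i, c i ^ 2 = e i := hc
  refine ⟨c, fun i j hij => ?_, fun i => ?_⟩
  · exact e.injective (Subtype.ext (by simpa [hc] using hij))
  · exact (hc i).trans_ne (e i).2.2

theorem exists_finrank_ker_infinitesimalAction_eq {m n K : Type*} [Fintype m] [Fintype n]
    [DecidableEq m] [DecidableEq n] [Field K] [Infinite K] [NeZero (2 : K)]
    (hmn : Fintype.card n ≤ Fintype.card m) :
    ∃ A : Matrix m n K, finrank K (LinearMap.ker (infinitesimalAction A)) =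
      (Fintype.card m - Fintype.card n).choose 2 := by
  obtain ⟨f⟩ := Function.Embedding.nonempty_of_card_le hmn
  obtain ⟨c, hc, hc₀⟩ := exists_injective_sq_and_sq_ne_zero n K
  obtain ⟨A, hA⟩ := exists_transpose_mul_self_eq_diagonal_sq f c
  exact ⟨A, finrank_ker_infinitesimalAction_of_transpose_mul_self_eq_diagonal hA hc hc₀⟩

theorem stmt0_general {m n K : Type*} [Fintype m] [Fintype n] [DecidableEq m] [DecidableEq n]
    [Field K] [Infinite K] [NeZero (2 : K)] (hmn : Fintype.card n ≤ Fintype.card m) :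
    IsLeast {d : ℕ | ∃ A : Matrix m n K, d = finrank K (LinearMap.ker (infinitesimalAction A))}
      ((Fintype.card m - Fintype.card n).choose 2) ∧
    IsGreatest {d : ℕ | ∃ A : Matrix m n K,
        d = finrank K (LinearMap.range (infinitesimalAction A))}
      (Fintype.card m * Fintype.card n - Fintype.card n) := by
  obtain ⟨D, hD⟩ := exists_finrank_ker_infinitesimalAction_eq (K := K) hmn
  have hker := choose_two_le_finrank_ker_infinitesimalAction (m := m) (n := n) (K := K)
  have hsum := finrank_range_infinitesimalAction_add_finrank_ker (K := K) hmn
  refine ⟨⟨⟨D, hD.symm⟩, ?_⟩, ⟨D, ?_⟩, ?_⟩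
  · rintro _ ⟨A, rfl⟩
    exact hker A
  · exact (Nat.add_right_cancel (hD ▸ hsum D)).symm
  · rintro _ ⟨A, rfl⟩
    refine Nat.le_of_add_le_add_right (b := finrank K (LinearMap.ker (infinitesimalAction A))) ?_
    rw [hsum A]
    exact Nat.add_le_add_left (hker A) _

section Span

attribute [local instance] LieRing.ofAssociativeRing

variable {m n : ℕ} (A : Matrix (Fin m) (Fin n) ℝ)

theorem finrank_span_tangSet0 :
    finrank ℝ (Submodule.span ℝ (tangSet0 A)) =
      finrank ℝ (LinearMap.range (infinitesimalAction A)) := by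
  have htang : tangSet0 A = LinearMap.range (infinitesimalAction A) := by
    ext B
    constructor
    · rintro ⟨X, Y, hX, hY, rfl⟩
      exact ⟨(⟨X, (mem_so _ _ _).2 hX⟩, ⟨Y, (mem_so _ _ _).2 hY⟩), rfl⟩
    · rintro ⟨⟨X, Y⟩, rfl⟩
      exact ⟨X, Y, (mem_so _ _ _).1 X.2, (mem_so _ _ _).1 Y.2, rfl⟩
  rw [htang, Submodule.span_eq]

theorem finrank_span_stabSet0 :
    finrank ℝ (Submodule.span ℝ (stabSet0 A)) =
      finrank ℝ (LinearMap.ker (infinitesimalAction A)) := by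
  let ι := (so (Fin m) ℝ).toSubmodule.subtype.prodMap (so (Fin n) ℝ).toSubmodule.subtype
  have hι : Function.Injective ι := Subtype.val_injective.prodMap Subtype.val_injective
  have hstab : stabSet0 A = (LinearMap.ker (infinitesimalAction A)).map ι := by
    ext p
    constructor
    · rintro ⟨hX, hY, hXY⟩
      exact ⟨(⟨p.1, (mem_so _ _ _).2 hX⟩, ⟨p.2, (mem_so _ _ _).2 hY⟩),
        mem_ker_infinitesimalAction.2 hXY, rfl⟩
    · rintro ⟨⟨X, Y⟩, hXY, rfl⟩
      exact ⟨(mem_so _ _ _).1 X.2, (mem_so _ _ _).1 Y.2, mem_ker_infinitesimalAction.1 hXY⟩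
  rw [hstab, Submodule.span_eq]
  exact (Submodule.equivMapOfInjective ι hι _).finrank_eq.symm

end Span

theorem stmt0 (m n : ℕ) (hn : 1 ≤ n) (hmn : n ≤ m) :
    IsLeast {d : ℕ | ∃ A : Matrix (Fin m) (Fin n) ℝ,
        d = Module.finrank ℝ (Submodule.span ℝ (stabSet0 A))}
      ((m - n) * (m - n - 1) / 2) ∧
    IsGreatest {d : ℕ | ∃ A : Matrix (Fin m) (Fin n) ℝ,
        d = Module.finrank ℝ (Submodule.span ℝ (tangSet0 A))}
      (m * n - n) := by
  simpa only [finrank_span_tangSet0, finrank_span_stabSet0, ← Nat.choose_two_right,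
    Fintype.card_fin]
    using stmt0_general (m := Fin m) (n := Fin n) (K := ℝ) (by simpa only [Fintype.card_fin])
end

section
/- Let m ≥ n ≥ 1 be integers and let ℍ denote the quaternions. For A ∈ Matrix (Fin m) (Fin n) ℍ let S(A) = {(X,Y) ∈ 𝔰𝔭(m) × 𝔰𝔭(n) : X·A = A·Y} and T(A) = {X·A − A·Y : X ∈ 𝔰𝔭(m), Y ∈ 𝔰𝔭(n)}, regarded as real vector spaces. Then the minimum over all A of dim_ℝ S(A) equals (m−n)(2(m−n)+1) + 3n, and the maximum over all A of dim_ℝ T(A) equals 4mn − n. Equivalently, the action of Sp(m)×Sp(n) on m×n quaternionic matrices by (g,h)·A = g A h* has principal isotropy groups of dimension dim(Sp(m−n)×Sp(1)ⁿ) and cohomogeneity n. -/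
open Matrix Quaternion

/-- `S(A) = {(X,Y) ∈ 𝔰𝔭(m) × 𝔰𝔭(n) : X·A = A·Y}` (skew-Hermitian quaternionic matrices). -/
def stabSet2 {m n : ℕ} (A : Matrix (Fin m) (Fin n) (Quaternion ℝ)) :
    Set (Matrix (Fin m) (Fin m) (Quaternion ℝ) × Matrix (Fin n) (Fin n) (Quaternion ℝ)) :=
  {p | p.1ᴴ = -p.1 ∧ p.2ᴴ = -p.2 ∧ p.1 * A = A * p.2}

/-- `T(A) = {X·A − A·Y : X ∈ 𝔰𝔭(m), Y ∈ 𝔰𝔭(n)}`. -/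
def tangSet2 {m n : ℕ} (A : Matrix (Fin m) (Fin n) (Quaternion ℝ)) :
    Set (Matrix (Fin m) (Fin n) (Quaternion ℝ)) :=
  {B | ∃ X : Matrix (Fin m) (Fin m) (Quaternion ℝ), ∃ Y : Matrix (Fin n) (Fin n) (Quaternion ℝ),
    Xᴴ = -X ∧ Yᴴ = -Y ∧ B = X * A - A * Y}

/-!
Every quaternionic matrix lies in the orbit of a real rectangular diagonal matrix (singular value
decomposition): fix a diagonal `S` with distinct positive entries and let `B = g A h` maximise
`Re tr (B Sᴴ)` over the compact orbit of `A`. The first-order conditions say that `B Sᴴ` and `Sᴴ B`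
are Hermitian, and comparing entries forces `B` to be real diagonal.

At a real diagonal matrix all tangent vectors `X A - A Y` have zero real diagonal, because `X` and
`Y` have imaginary diagonals; so no orbit has dimension above `4mn - n`. At a diagonal matrix with
distinct positive entries a stabilizing pair `(X, Y)` is determined by the `𝔰𝔭(m - n)` block of `X`
and the imaginary diagonal of `Y`, so the stabilizer has dimension at most `dim 𝔰𝔭(m - n) + 3n`. By
rank-nullity both bounds are sharp.
-/

namespace QuaternionMatrix

variable {ι κ : Type*}

instance : StarModule ℝ ℍ[ℝ] where
  star_smul := Quaternion.star_smul

/-- The real part of a quaternion as a real-linear form. -/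
def reLinear : ℍ[ℝ] →ₗ[ℝ] ℝ := QuaternionAlgebra.reₗ (-1) 0 (-1)

section ReTrace

variable [Fintype ι] [Fintype κ]

lemma re_sum {α : Type*} (s : Finset α) (f : α → ℍ[ℝ]) : (∑ i ∈ s, f i).re = ∑ i ∈ s, (f i).re :=
  map_sum reLinear f s

lemma re_trace_mul_comm (P : Matrix ι κ ℍ[ℝ]) (Q : Matrix κ ι ℍ[ℝ]) :
    (trace (P * Q)).re = (trace (Q * P)).re := by
  simp only [trace, diag, Matrix.mul_apply, re_sum]
  rw [Finset.sum_comm]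
  refine Finset.sum_congr rfl fun k _ => Finset.sum_congr rfl fun i _ => ?_
  rw [Quaternion.re_mul, Quaternion.re_mul]
  ring

lemma re_trace_conjTranspose (M : Matrix ι ι ℍ[ℝ]) : (trace Mᴴ).re = (trace M).re := by
  rw [trace_conjTranspose, Quaternion.re_star]

lemma re_trace_conjTranspose_mul_self (A : Matrix κ ι ℍ[ℝ]) :
    (trace (Aᴴ * A)).re = ∑ i, ∑ j, normSq (A j i) := by
  simp only [trace, diag, Matrix.mul_apply, conjTranspose_apply, Quaternion.star_mul_self, re_sum,
    Quaternion.re_coe]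

lemma re_trace_conjTranspose_mul_self_eq_zero_iff {A : Matrix κ ι ℍ[ℝ]} :
    (trace (Aᴴ * A)).re = 0 ↔ A = 0 := by
  simp only [re_trace_conjTranspose_mul_self, Finset.sum_eq_zero_iff_of_nonneg,
    Finset.sum_nonneg, Quaternion.normSq_nonneg, implies_true, Finset.mem_univ, forall_const,
    Quaternion.normSq_eq_zero, ← Matrix.ext_iff, Matrix.zero_apply]
  exact forall_comm

end ReTrace

section Unitary

variable [Fintype ι] [DecidableEq ι]

lemma norm_apply_le_one_of_mem_unitary {U : Matrix ι ι ℍ[ℝ]} (hU : U ∈ unitary (Matrix ι ι ℍ[ℝ]))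
    (i j : ι) : ‖U i j‖ ≤ 1 := by
  have hcol : ∑ k, normSq (U k j) = 1 := by
    have hUU : star U * U = 1 := Unitary.star_mul_self_of_mem hU
    have h := congrArg QuaternionAlgebra.re (congrFun₂ hUU j j)
    simpa only [star_eq_conjTranspose, Matrix.mul_apply, conjTranspose_apply,
      Quaternion.star_mul_self, re_sum, Quaternion.re_coe, one_apply_eq, Quaternion.re_one] using h
  have hle : normSq (U i j) ≤ 1 :=
    hcol ▸ Finset.single_le_sum (f := fun k => normSq (U k j))
      (fun _ _ => Quaternion.normSq_nonneg) (Finset.mem_univ i)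
  rw [Quaternion.normSq_eq_norm_mul_self] at hle
  nlinarith [norm_nonneg (U i j)]

lemma isCompact_unitary : IsCompact (unitary (Matrix ι ι ℍ[ℝ]) : Set (Matrix ι ι ℍ[ℝ])) := by
  have : ProperSpace ℍ[ℝ] := FiniteDimensional.proper ℝ _
  have hclosed : IsClosed (unitary (Matrix ι ι ℍ[ℝ]) : Set (Matrix ι ι ℍ[ℝ])) := isClosed_unitary
  refine (isCompact_univ_pi fun _ => isCompact_univ_pi fun _ =>
    isCompact_closedBall (0 : ℍ[ℝ]) 1).of_isClosed_subset hclosed ?_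
  intro U hU i _ j _
  simpa only [mem_closedBall_zero_iff] using norm_apply_le_one_of_mem_unitary hU i j

lemma exp_mem_unitary_of_conjTranspose_eq_neg {X : Matrix ι ι ℍ[ℝ]} (hX : Xᴴ = -X) :
    NormedSpace.exp X ∈ unitary (Matrix ι ι ℍ[ℝ]) := by
  let : NormedAlgebra ℚ ℍ[ℝ] := .restrictScalars ℚ ℝ _
  rw [Unitary.mem_iff, star_eq_conjTranspose, ← Matrix.exp_conjTranspose, hX,
    ← Matrix.exp_add_of_commute _ _ (Commute.refl X).neg_left,
    ← Matrix.exp_add_of_commute _ _ (Commute.refl X).neg_right, neg_add_cancel, add_neg_cancel,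
    NormedSpace.exp_zero, and_self_iff]

open scoped Matrix.Norms.Operator in
-- `t ↦ Re tr (exp (t X) M)` has derivative `Re tr (X M)` at its maximum `t = 0`.
lemma re_trace_mul_eq_zero_of_forall_unitary_le {M X : Matrix ι ι ℍ[ℝ]}
    (hM : ∀ U ∈ unitary (Matrix ι ι ℍ[ℝ]), (trace (U * M)).re ≤ (trace M).re) (hX : Xᴴ = -X) :
    (trace (X * M)).re = 0 := by
  let : NormedAlgebra ℚ (Matrix ι ι ℍ[ℝ]) := .restrictScalars ℚ ℝ _
  let φ : Matrix ι ι ℍ[ℝ] →L[ℝ] ℝ := LinearMap.toContinuousLinearMap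
    (reLinear ∘ₗ traceLinearMap ι ℝ ℍ[ℝ] ∘ₗ LinearMap.mulRight ℝ M)
  have hφ : ∀ U, φ U = (trace (U * M)).re := fun _ => rfl
  have hexp (t : ℝ) : NormedSpace.exp (t • X) ∈ unitary (Matrix ι ι ℍ[ℝ]) :=
    exp_mem_unitary_of_conjTranspose_eq_neg (by rw [conjTranspose_smul, hX, star_trivial, smul_neg])
  have hmax : IsLocalMax (fun t : ℝ => φ (NormedSpace.exp (t • X))) 0 :=
    Filter.Eventually.of_forall fun t => by
      simpa only [hφ, zero_smul, NormedSpace.exp_zero, one_mul] using hM _ (hexp t)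
  have hderiv := φ.hasFDerivAt.comp_hasDerivAt 0 (hasDerivAt_exp_smul_const X (0 : ℝ))
  simpa only [hφ, zero_smul, NormedSpace.exp_zero, one_mul] using! hmax.hasDerivAt_eq_zero hderiv

lemma isHermitian_of_forall_unitary_re_trace_le {M : Matrix ι ι ℍ[ℝ]}
    (hM : ∀ U ∈ unitary (Matrix ι ι ℍ[ℝ]), (trace (U * M)).re ≤ (trace M).re) :
    M.IsHermitian := by
  set X := Mᴴ - M with hX
  have hskew : Xᴴ = -X := by rw [hX, conjTranspose_sub, conjTranspose_conjTranspose, neg_sub]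
  have hXM : (trace (X * M)).re = 0 := re_trace_mul_eq_zero_of_forall_unitary_le hM hskew
  have hXM' : (trace (X * Mᴴ)).re = 0 := by
    rw [← re_trace_conjTranspose, conjTranspose_mul, conjTranspose_conjTranspose, hskew,
      Matrix.mul_neg, trace_neg, Quaternion.re_neg, re_trace_mul_comm, hXM, neg_zero]
  have hXX : (trace (Xᴴ * X)).re = 0 := by
    rw [hskew, Matrix.neg_mul, trace_neg, Quaternion.re_neg]
    nth_rw 2 [hX]
    rw [Matrix.mul_sub, trace_sub, Quaternion.re_sub, hXM, hXM', sub_zero, neg_zero]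
  exact sub_eq_zero.mp (re_trace_conjTranspose_mul_self_eq_zero_iff.mp hXX)

end Unitary

section SkewHermitian

/-- The imaginary quaternions, that is, the Lie algebra `𝔰𝔭(1)`. -/
abbrev imaginary : Submodule ℝ ℍ[ℝ] := skewAdjoint.submodule ℝ ℍ[ℝ]

/-- The Lie algebra `𝔰𝔭(ι)` of skew-Hermitian quaternionic matrices with index type `ι`, the
domain of the infinitesimal action. -/
noncomputable abbrev sp (ι : Type*) : Submodule ℝ (Matrix ι ι ℍ[ℝ]) :=
  skewAdjoint.submodule ℝ (Matrix ι ι ℍ[ℝ])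

lemma star_apply_of_mem_sp {X : Matrix ι ι ℍ[ℝ]} (hX : X ∈ sp ι) (i j : ι) :
    star (X i j) = -X j i :=
  congrFun₂ (show star X = -X from hX) j i

lemma re_apply_self_of_mem_sp {X : Matrix ι ι ℍ[ℝ]} (hX : X ∈ sp ι) (i : ι) : (X i i).re = 0 :=
  Quaternion.star_eq_neg.mp (star_apply_of_mem_sp hX i i)

lemma finrank_imaginary : Module.finrank ℝ imaginary = 3 := by
  have hker : imaginary = LinearMap.ker reLinear := by
    ext q
    exact Quaternion.star_eq_neg
  have hsurj : Function.Surjective reLinear :=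
    fun r => ⟨(r : ℍ[ℝ]), Quaternion.re_coe r⟩
  have h := reLinear.finrank_range_add_finrank_ker
  rw [LinearMap.range_eq_top.mpr hsurj, finrank_top, Module.finrank_self, ← hker] at h
  have hdim : Module.finrank ℝ ℍ[ℝ] = 4 := Quaternion.finrank_eq_four
  omega

/-- A skew-Hermitian matrix is determined by its strictly upper triangular entries, which are
arbitrary, and its diagonal entries, which are arbitrary imaginary quaternions. -/
noncomputable def spEquivUpperDiag (ι : Type*) [LinearOrder ι] :
    sp ι ≃ₗ[ℝ] ({p : ι × ι // p.1 < p.2} → ℍ[ℝ]) × (ι → imaginary) where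
  toFun X := (fun p => X.1 p.1.1 p.1.2, fun i => ⟨X.1 i i, star_apply_of_mem_sp X.2 i i⟩)
  map_add' _ _ := rfl
  map_smul' _ _ := rfl
  invFun c := ⟨of fun i j => if h : i < j then c.1 ⟨(i, j), h⟩
      else if h : j < i then -star (c.1 ⟨(j, i), h⟩) else c.2 i, by
    refine Matrix.ext fun i j => ?_
    rcases lt_trichotomy i j with hij | rfl | hij
    · simp [star_apply, hij, hij.not_gt]
    · simpa only [star_apply, Matrix.neg_apply, of_apply, lt_irrefl, dite_false] using! (c.2 i).2
    · simp [star_apply, hij, hij.not_gt]⟩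
  left_inv X := by
    refine Subtype.ext (Matrix.ext fun i j => ?_)
    rcases lt_trichotomy i j with hij | rfl | hij
    · simp [hij]
    · simp
    · simp [hij, hij.not_gt, star_apply_of_mem_sp X.2]
  right_inv c := by
    refine Prod.ext (funext fun p => ?_) (funext fun i => ?_)
    · simp [p.2]
    · simp

lemma finrank_sp (ι : Type*) [Fintype ι] :
    Module.finrank ℝ (sp ι) = Fintype.card ι * (2 * Fintype.card ι + 1) := by
  let : LinearOrder ι := LinearOrder.lift' (Fintype.equivFin ι) (Fintype.equivFin ι).injective
  rw [(spEquivUpperDiag ι).finrank_eq, Module.finrank_prod, Module.finrank_pi_fintype,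
    Module.finrank_pi_fintype]
  simp only [Quaternion.finrank_eq_four, finrank_imaginary, Finset.sum_const, Finset.card_univ,
    smul_eq_mul, Fintype.card_subtype, Fintype.card_product_filter_lt]
  qify
  rw [Nat.cast_choose_two]
  ring

end SkewHermitian

section RectDiagonal

variable [DecidableEq κ] (e : ι ↪ κ) (σ : ι → ℝ)

/-- The rectangular matrix with real entry `σ k` in position `(e k, k)` and zeros elsewhere: the
embedding `e` of the columns into the rows marks the "diagonal". -/
noncomputable def rectDiagonal : Matrix κ ι ℍ[ℝ] :=
  of fun i k => if i = e k then (σ k : ℍ[ℝ]) else 0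

lemma rectDiagonal_apply_self (k : ι) : rectDiagonal e σ (e k) k = σ k := if_pos rfl

lemma rectDiagonal_apply_of_ne {i : κ} {k : ι} (h : i ≠ e k) : rectDiagonal e σ i k = 0 :=
  if_neg h

lemma mul_rectDiagonal_apply {α : Type*} [Fintype κ] (X : Matrix α κ ℍ[ℝ]) (i : α) (k : ι) :
    (X * rectDiagonal e σ) i k = σ k • X i (e k) := by
  rw [Matrix.mul_apply, Finset.sum_eq_single (e k)]
  · rw [rectDiagonal_apply_self, Quaternion.mul_coe_eq_smul]
  · intro j _ hj
    rw [rectDiagonal_apply_of_ne e σ hj, mul_zero]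
  · simp

lemma rectDiagonal_mul_apply {α : Type*} [Fintype ι] (Y : Matrix ι α ℍ[ℝ]) (l : ι) (a : α) :
    (rectDiagonal e σ * Y) (e l) a = σ l • Y l a := by
  rw [Matrix.mul_apply, Finset.sum_eq_single l]
  · rw [rectDiagonal_apply_self, Quaternion.coe_mul_eq_smul]
  · intro k _ hk
    rw [rectDiagonal_apply_of_ne e σ (e.injective.ne hk.symm), zero_mul]
  · simp

lemma rectDiagonal_mul_apply_of_notMem {α : Type*} [Fintype ι] (Y : Matrix ι α ℍ[ℝ]) {i : κ}
    (hi : i ∉ Set.range e) (a : α) : (rectDiagonal e σ * Y) i a = 0 := by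
  rw [Matrix.mul_apply]
  refine Finset.sum_eq_zero fun k _ => ?_
  rw [rectDiagonal_apply_of_ne e σ fun h => hi ⟨k, h.symm⟩, zero_mul]

end RectDiagonal

section SingularValues

lemma exists_pos_injective (ι : Type*) [Countable ι] :
    ∃ σ : ι → ℝ, (∀ k, 0 < σ k) ∧ Function.Injective σ := by
  obtain ⟨f⟩ := nonempty_embedding_nat ι
  exact ⟨fun k => f k + 1, fun k => by positivity, fun k l h => f.injective (by simpa using h)⟩

lemma eq_zero_of_smul_eq_smul_swap {𝕜 V : Type*} [Field 𝕜] [LinearOrder 𝕜]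
    [IsStrictOrderedRing 𝕜] [AddCommGroup V] [Module 𝕜 V] {a b : 𝕜} (ha : 0 ≤ a) (hb : 0 ≤ b)
    (hab : a ≠ b) {u v : V} (h₁ : a • u = b • v) (h₂ : b • u = a • v) : u = 0 := by
  have hsq : (a ^ 2 - b ^ 2) • u = 0 := by
    rw [sub_smul, sq, sq, mul_smul, mul_smul, h₁, h₂, smul_comm, sub_self]
  have hne : a ^ 2 - b ^ 2 ≠ 0 :=
    sub_ne_zero.mpr fun h => hab ((pow_left_inj₀ ha hb two_ne_zero).mp h)
  exact (smul_eq_zero.mp hsq).resolve_left hne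

variable [Fintype ι] [Fintype κ] [DecidableEq κ]

-- Take `(g, h)` maximising `Re tr (g A h Sᴴ)` over the compact group.
lemma exists_unitary_isHermitian [DecidableEq ι] (A S : Matrix κ ι ℍ[ℝ]) :
    ∃ g ∈ unitary (Matrix κ κ ℍ[ℝ]), ∃ h ∈ unitary (Matrix ι ι ℍ[ℝ]),
      (g * A * h * Sᴴ).IsHermitian ∧ (Sᴴ * (g * A * h)).IsHermitian := by
  have hcont : Continuous fun p : Matrix κ κ ℍ[ℝ] × Matrix ι ι ℍ[ℝ] =>
      (trace (p.1 * A * p.2 * Sᴴ)).re :=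
    Quaternion.continuous_re.comp (by fun_prop)
  obtain ⟨⟨g, h⟩, ⟨hg, hh⟩, hmax⟩ := (isCompact_unitary.prod isCompact_unitary).exists_isMaxOn
    ⟨(1, 1), one_mem (unitary (Matrix κ κ ℍ[ℝ])), one_mem (unitary (Matrix ι ι ℍ[ℝ]))⟩
    hcont.continuousOn
  refine ⟨g, hg, h, hh, isHermitian_of_forall_unitary_re_trace_le fun U hU => ?_,
    isHermitian_of_forall_unitary_re_trace_le fun U hU => ?_⟩
  · have hUg : U * g ∈ unitary (Matrix κ κ ℍ[ℝ]) := mul_mem hU hg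
    simpa only [Set.mem_ofPred_eq, Matrix.mul_assoc] using hmax (Set.mk_mem_prod hUg hh)
  · have hhU : h * U ∈ unitary (Matrix ι ι ℍ[ℝ]) := mul_mem hh hU
    rw [← Matrix.mul_assoc, re_trace_mul_comm, re_trace_mul_comm Sᴴ]
    simpa only [Set.mem_ofPred_eq, Matrix.mul_assoc] using hmax (Set.mk_mem_prod hg hhU)

lemma exists_eq_rectDiagonal_of_isHermitian {e : ι ↪ κ} {σ : ι → ℝ} (hpos : ∀ k, 0 < σ k)
    (hinj : Function.Injective σ) {B : Matrix κ ι ℍ[ℝ]}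
    (hκ : (rectDiagonal e σ * Bᴴ).IsHermitian) (hι : (Bᴴ * rectDiagonal e σ).IsHermitian) :
    ∃ τ : ι → ℝ, B = rectDiagonal e τ := by
  have hrow (k l : ι) : σ k • star (B (e l) k) = σ l • B (e k) l := by
    have h := hκ.apply (e k) (e l)
    rw [rectDiagonal_mul_apply, rectDiagonal_mul_apply] at h
    simpa using h.symm
  have hcol (k l : ι) : σ l • star (B (e l) k) = σ k • B (e k) l := by
    have h := hι.apply k l
    rw [mul_rectDiagonal_apply, mul_rectDiagonal_apply] at h
    simpa using h.symm
  have hdiag (k : ι) : B (e k) k = ((B (e k) k).re : ℍ[ℝ]) :=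
    Quaternion.star_eq_self.mp ((smul_right_injective _ (hpos k).ne') (hrow k k))
  refine ⟨fun k => (B (e k) k).re, Matrix.ext fun i l => ?_⟩
  by_cases hi : i ∈ Set.range e
  · obtain ⟨k, rfl⟩ := hi
    rcases eq_or_ne k l with rfl | hkl
    · rw [rectDiagonal_apply_self, ← hdiag]
    · rw [rectDiagonal_apply_of_ne e _ (e.injective.ne hkl)]
      exact eq_zero_of_smul_eq_smul_swap (hpos k).le (hpos l).le (hinj.ne hkl)
        (hcol k l).symm (hrow k l).symm
  · rw [rectDiagonal_apply_of_ne e _ fun h => hi ⟨l, h.symm⟩]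
    have h := hκ.apply i (e l)
    rw [rectDiagonal_mul_apply, rectDiagonal_mul_apply_of_notMem e σ _ hi] at h
    simpa [(hpos l).ne'] using h

lemma exists_eq_mul_rectDiagonal_mul [DecidableEq ι] (e : ι ↪ κ) (A : Matrix κ ι ℍ[ℝ]) :
    ∃ g ∈ unitary (Matrix κ κ ℍ[ℝ]), ∃ h ∈ unitary (Matrix ι ι ℍ[ℝ]), ∃ τ : ι → ℝ,
      A = g * rectDiagonal e τ * h := by
  obtain ⟨σ, hpos, hinj⟩ := exists_pos_injective ι
  obtain ⟨g, hg, h, hh, hκ, hι⟩ := exists_unitary_isHermitian A (rectDiagonal e σ)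
  have hκ' := hκ.conjTranspose
  have hι' := hι.conjTranspose
  rw [conjTranspose_mul, conjTranspose_conjTranspose] at hκ' hι'
  obtain ⟨τ, hτ⟩ := exists_eq_rectDiagonal_of_isHermitian hpos hinj hκ' hι'
  have hgg : star g * g = 1 := Unitary.star_mul_self_of_mem hg
  have hhh : h * star h = 1 := Unitary.mul_star_self_of_mem hh
  refine ⟨star g, Unitary.star_mem hg, star h, Unitary.star_mem hh, τ, ?_⟩
  rw [← hτ, ← Matrix.mul_assoc, ← Matrix.mul_assoc, hgg, Matrix.one_mul, Matrix.mul_assoc, hhh,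
    Matrix.mul_one]

end SingularValues

section InfinitesimalAction

variable [Fintype ι] [Fintype κ]

/-- The infinitesimal action of `𝔰𝔭(κ) × 𝔰𝔭(ι)` at the point `A`, whose range is the tangent space
of the orbit and whose kernel is the infinitesimal stabilizer. -/
noncomputable def infinitesimalAction (A : Matrix κ ι ℍ[ℝ]) :
    sp κ × sp ι →ₗ[ℝ] Matrix κ ι ℍ[ℝ] where
  toFun p := p.1.1 * A - A * p.2.1
  map_add' p q := by
    simp only [Prod.fst_add, Prod.snd_add, Submodule.coe_add, Matrix.add_mul, Matrix.mul_add]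
    abel
  map_smul' c p := by
    simp only [Prod.smul_fst, Prod.smul_snd, Submodule.coe_smul, Matrix.smul_mul, Matrix.mul_smul,
      RingHom.id_apply, smul_sub]

lemma infinitesimalAction_apply (A : Matrix κ ι ℍ[ℝ]) (p : sp κ × sp ι) :
    infinitesimalAction A p = p.1.1 * A - A * p.2.1 := rfl

lemma finrank_range_infinitesimalAction_add_finrank_ker (A : Matrix κ ι ℍ[ℝ]) :
    Module.finrank ℝ (infinitesimalAction A).range + Module.finrank ℝ (infinitesimalAction A).ker =
      Fintype.card κ * (2 * Fintype.card κ + 1) + Fintype.card ι * (2 * Fintype.card ι + 1) := by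
  rw [LinearMap.finrank_range_add_finrank_ker, Module.finrank_prod, finrank_sp, finrank_sp]

lemma finrank_range_infinitesimalAction_mul_mul_le [DecidableEq ι] [DecidableEq κ]
    {g : Matrix κ κ ℍ[ℝ]} (hg : g ∈ unitary (Matrix κ κ ℍ[ℝ]))
    {h : Matrix ι ι ℍ[ℝ]} (hh : h ∈ unitary (Matrix ι ι ℍ[ℝ])) (A : Matrix κ ι ℍ[ℝ]) :
    Module.finrank ℝ (infinitesimalAction (g * A * h)).range ≤
      Module.finrank ℝ (infinitesimalAction A).range := by
  let T : Matrix κ ι ℍ[ℝ] →ₗ[ℝ] Matrix κ ι ℍ[ℝ] :=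
    { toFun := fun B => g * B * h
      map_add' := fun B C => by rw [Matrix.mul_add, Matrix.add_mul]
      map_smul' := fun c B => by rw [Matrix.mul_smul, Matrix.smul_mul, RingHom.id_apply] }
  have hgg : g * star g = 1 := Unitary.mul_star_self_of_mem hg
  have hhh : star h * h = 1 := Unitary.star_mul_self_of_mem hh
  have hle : (infinitesimalAction (g * A * h)).range ≤ (infinitesimalAction A).range.map T := by
    rintro _ ⟨⟨X, Y⟩, rfl⟩
    refine ⟨_, ⟨(⟨star g * X.1 * g, skewAdjoint.conjugate' X.2 g⟩,
      ⟨h * Y.1 * star h, skewAdjoint.conjugate Y.2 h⟩), rfl⟩, ?_⟩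
    change g * (star g * X.1 * g * A - A * (h * Y.1 * star h)) * h =
      X.1 * (g * A * h) - g * A * h * Y.1
    calc g * (star g * X.1 * g * A - A * (h * Y.1 * star h)) * h
        = (g * star g) * X.1 * (g * A * h) - g * A * h * Y.1 * (star h * h) := by
          simp only [Matrix.mul_sub, Matrix.sub_mul, Matrix.mul_assoc]
      _ = X.1 * (g * A * h) - g * A * h * Y.1 := by
          rw [hgg, hhh, Matrix.one_mul, Matrix.mul_one]
  exact (Submodule.finrank_mono hle).trans (Submodule.finrank_map_le T _)

end InfinitesimalAction

section OrbitDimension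

/-- The real parts of the entries on the diagonal marked by `e`. The kernel is the orthogonal
complement of the real rectangular diagonal matrices and contains the orbit tangent space at each
of them. -/
def reDiag (e : ι ↪ κ) : Matrix κ ι ℍ[ℝ] →ₗ[ℝ] ι → ℝ where
  toFun B k := (B (e k) k).re
  map_add' _ _ := rfl
  map_smul' _ _ := rfl

lemma reDiag_apply (e : ι ↪ κ) (B : Matrix κ ι ℍ[ℝ]) (k : ι) : reDiag e B k = (B (e k) k).re := rfl

variable [Fintype ι] [Fintype κ]

lemma finrank_ker_reDiag_add_card (e : ι ↪ κ) :
    Module.finrank ℝ (reDiag e).ker + Fintype.card ι = 4 * Fintype.card κ * Fintype.card ι := by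
  classical
  have hsurj : Function.Surjective (reDiag e) := fun τ => ⟨rectDiagonal e τ, funext fun k => by
    rw [reDiag_apply, rectDiagonal_apply_self, Quaternion.re_coe]⟩
  have h := (reDiag e).finrank_range_add_finrank_ker
  rw [LinearMap.range_eq_top.mpr hsurj, finrank_top, Module.finrank_fintype_fun_eq_card,
    Module.finrank_matrix, Quaternion.finrank_eq_four] at h
  linarith

lemma range_infinitesimalAction_rectDiagonal_le [DecidableEq κ] (e : ι ↪ κ) (τ : ι → ℝ) :
    (infinitesimalAction (rectDiagonal e τ)).range ≤ (reDiag e).ker := by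
  rintro _ ⟨⟨X, Y⟩, rfl⟩
  refine funext fun k => ?_
  rw [reDiag_apply, infinitesimalAction_apply, Matrix.sub_apply, mul_rectDiagonal_apply,
    rectDiagonal_mul_apply, Quaternion.re_sub, Quaternion.re_smul, Quaternion.re_smul,
    re_apply_self_of_mem_sp X.2, re_apply_self_of_mem_sp Y.2, smul_zero, sub_zero, Pi.zero_apply]

lemma finrank_range_infinitesimalAction_add_card_le (e : ι ↪ κ) (A : Matrix κ ι ℍ[ℝ]) :
    Module.finrank ℝ (infinitesimalAction A).range + Fintype.card ι ≤
      4 * Fintype.card κ * Fintype.card ι := by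
  classical
  obtain ⟨g, hg, h, hh, τ, rfl⟩ := exists_eq_mul_rectDiagonal_mul e A
  rw [← finrank_ker_reDiag_add_card e]
  exact Nat.add_le_add_right ((finrank_range_infinitesimalAction_mul_mul_le hg hh _).trans
    (Submodule.finrank_mono (range_infinitesimalAction_rectDiagonal_le e τ))) _

end OrbitDimension

section RegularStabilizer

/-- Restriction of a pair of skew-Hermitian matrices to the rows and columns of the first not met
by the diagonal `e`, and to the diagonal entries of the second. -/
def stabilizerRestrict (e : ι ↪ κ) :
    sp κ × sp ι →ₗ[ℝ] sp {i // i ∉ Set.range e} × (ι → imaginary) where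
  toFun p := (⟨p.1.1.submatrix Subtype.val Subtype.val,
      Matrix.ext fun i j => star_apply_of_mem_sp p.1.2 j.1 i.1⟩,
    fun k => ⟨p.2.1 k k, star_apply_of_mem_sp p.2.2 k k⟩)
  map_add' _ _ := rfl
  map_smul' _ _ := rfl

variable [Fintype ι] [Fintype κ] [DecidableEq κ] {e : ι ↪ κ} {σ : ι → ℝ}

lemma smul_apply_eq_smul_apply {X : Matrix κ κ ℍ[ℝ]} {Y : Matrix ι ι ℍ[ℝ]}
    (h : X * rectDiagonal e σ = rectDiagonal e σ * Y) (l k : ι) :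
    σ k • X (e l) (e k) = σ l • Y l k := by
  rw [← mul_rectDiagonal_apply, h, rectDiagonal_mul_apply]

lemma smul_apply_eq_smul_apply_swap {X : Matrix κ κ ℍ[ℝ]} {Y : Matrix ι ι ℍ[ℝ]} (hX : X ∈ sp κ)
    (hY : Y ∈ sp ι) (h : X * rectDiagonal e σ = rectDiagonal e σ * Y) (l k : ι) :
    σ l • X (e l) (e k) = σ k • Y l k := by
  have hstar := congrArg star (smul_apply_eq_smul_apply h k l)
  rwa [Quaternion.star_smul, Quaternion.star_smul, star_apply_of_mem_sp hX,
    star_apply_of_mem_sp hY, smul_neg, smul_neg, neg_inj] at hstar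

lemma eq_zero_of_stabilizerRestrict_eq_zero (hpos : ∀ k, 0 < σ k) (hinj : Function.Injective σ)
    {p : sp κ × sp ι} (hp : p ∈ (infinitesimalAction (rectDiagonal e σ)).ker)
    (hres : stabilizerRestrict e p = 0) : p = 0 := by
  obtain ⟨⟨X, hX⟩, ⟨Y, hY⟩⟩ := p
  have hXY : X * rectDiagonal e σ = rectDiagonal e σ * Y := sub_eq_zero.mp hp
  have hcompl {i j : κ} (hi : i ∉ Set.range e) (hj : j ∉ Set.range e) : X i j = 0 :=
    congrFun₂ (congrArg (fun q => q.1.1) hres) ⟨i, hi⟩ ⟨j, hj⟩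
  have hdiag (k : ι) : Y k k = 0 := congrArg Subtype.val (congrFun (congrArg Prod.snd hres) k)
  have hY0 (l k : ι) : Y l k = 0 := by
    rcases eq_or_ne l k with rfl | hlk
    · exact hdiag l
    · exact eq_zero_of_smul_eq_smul_swap (hpos l).le (hpos k).le (hinj.ne hlk)
        (smul_apply_eq_smul_apply hXY l k).symm (smul_apply_eq_smul_apply_swap hX hY hXY l k).symm
  have hY_eq : Y = 0 := Matrix.ext hY0
  have hcol (i : κ) (k : ι) : X i (e k) = 0 := by
    have h : (X * rectDiagonal e σ) i k = 0 := by
      rw [hXY, hY_eq, Matrix.mul_zero, Matrix.zero_apply]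
    rw [mul_rectDiagonal_apply] at h
    exact (smul_eq_zero.mp h).resolve_left (hpos k).ne'
  have hX_eq : X = 0 := by
    refine Matrix.ext fun i j => ?_
    by_cases hj : j ∈ Set.range e
    · obtain ⟨k, rfl⟩ := hj
      exact hcol i k
    by_cases hi : i ∈ Set.range e
    · obtain ⟨k, rfl⟩ := hi
      rw [← neg_inj, ← star_apply_of_mem_sp hX j (e k), hcol, star_zero, Matrix.zero_apply,
        neg_zero]
    · exact hcompl hi hj
  exact Prod.ext (Subtype.ext hX_eq) (Subtype.ext hY_eq)

lemma finrank_ker_infinitesimalAction_rectDiagonal_le (hpos : ∀ k, 0 < σ k)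
    (hinj : Function.Injective σ) :
    Module.finrank ℝ (infinitesimalAction (rectDiagonal e σ)).ker ≤
      (Fintype.card κ - Fintype.card ι) * (2 * (Fintype.card κ - Fintype.card ι) + 1) +
        3 * Fintype.card ι := by
  let f := (stabilizerRestrict e).domRestrict (infinitesimalAction (rectDiagonal e σ)).ker
  have hf : Function.Injective f := fun p q hpq => Subtype.ext <| sub_eq_zero.mp <|
    eq_zero_of_stabilizerRestrict_eq_zero hpos hinj (sub_mem p.2 q.2)
      ((map_sub _ _ _).trans (sub_eq_zero.mpr hpq))
  refine (LinearMap.finrank_le_finrank_of_injective hf).trans_eq ?_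
  rw [Module.finrank_prod, finrank_sp, Module.finrank_pi_fintype, Fintype.card_subtype_compl,
    Set.card_range_of_injective e.injective]
  simp only [finrank_imaginary, Finset.sum_const, Finset.card_univ, smul_eq_mul]
  rw [Nat.mul_comm (Fintype.card ι)]

end RegularStabilizer

section Span

variable {m n : ℕ}

lemma finrank_span_tangSet2 (A : Matrix (Fin m) (Fin n) ℍ[ℝ]) :
    Module.finrank ℝ (Submodule.span ℝ (tangSet2 A)) =
      Module.finrank ℝ (infinitesimalAction A).range := by
  have hset : tangSet2 A = ((infinitesimalAction A).range : Set _) := Set.ext fun B =>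
    ⟨fun ⟨X, Y, hX, hY, hB⟩ => ⟨(⟨X, hX⟩, ⟨Y, hY⟩), hB.symm⟩,
      fun ⟨⟨X, Y⟩, hB⟩ => ⟨X.1, Y.1, X.2, Y.2, hB.symm⟩⟩
  rw [hset, Submodule.span_eq]

lemma finrank_span_stabSet2 (A : Matrix (Fin m) (Fin n) ℍ[ℝ]) :
    Module.finrank ℝ (Submodule.span ℝ (stabSet2 A)) =
      Module.finrank ℝ (infinitesimalAction A).ker := by
  let incl := (sp (Fin m)).subtype.prodMap (sp (Fin n)).subtype
  have hset : stabSet2 A = ((infinitesimalAction A).ker.map incl : Set _) := Set.ext fun p =>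
    ⟨fun ⟨hX, hY, hp⟩ => ⟨(⟨p.1, hX⟩, ⟨p.2, hY⟩), sub_eq_zero.mpr hp, rfl⟩, by
      rintro ⟨⟨X, Y⟩, hp, rfl⟩
      exact ⟨X.2, Y.2, sub_eq_zero.mp hp⟩⟩
  have hincl : Function.Injective incl := Subtype.val_injective.prodMap Subtype.val_injective
  rw [hset, Submodule.span_eq]
  exact (Submodule.equivMapOfInjective incl hincl _).finrank_eq.symm

lemma finrank_span_tangSet2_add_finrank_span_stabSet2 (A : Matrix (Fin m) (Fin n) ℍ[ℝ]) :
    Module.finrank ℝ (Submodule.span ℝ (tangSet2 A)) +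
      Module.finrank ℝ (Submodule.span ℝ (stabSet2 A)) =
        m * (2 * m + 1) + n * (2 * n + 1) := by
  simpa only [finrank_span_tangSet2, finrank_span_stabSet2, Fintype.card_fin] using
    finrank_range_infinitesimalAction_add_finrank_ker A

end Span

end QuaternionMatrix

open QuaternionMatrix

theorem stmt2 (m n : ℕ) (hn : 1 ≤ n) (hmn : n ≤ m) :
    IsLeast {d : ℕ | ∃ A : Matrix (Fin m) (Fin n) (Quaternion ℝ),
        d = Module.finrank ℝ (Submodule.span ℝ (stabSet2 A))}
      ((m - n) * (2 * (m - n) + 1) + 3 * n) ∧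
    IsGreatest {d : ℕ | ∃ A : Matrix (Fin m) (Fin n) (Quaternion ℝ),
        d = Module.finrank ℝ (Submodule.span ℝ (tangSet2 A))}
      (4 * m * n - n) := by
  obtain ⟨σ, hpos, hinj⟩ := exists_pos_injective (Fin n)
  let S : Matrix (Fin m) (Fin n) ℍ[ℝ] := rectDiagonal (Fin.castLEEmb hmn) σ
  have hrange (A : Matrix (Fin m) (Fin n) ℍ[ℝ]) :
      Module.finrank ℝ (Submodule.span ℝ (tangSet2 A)) + n ≤ 4 * m * n := by
    simpa only [finrank_span_tangSet2, Fintype.card_fin] using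
      finrank_range_infinitesimalAction_add_card_le (Fin.castLEEmb hmn) A
  have hker : Module.finrank ℝ (Submodule.span ℝ (stabSet2 S)) ≤
      (m - n) * (2 * (m - n) + 1) + 3 * n := by
    simpa only [finrank_span_stabSet2, Fintype.card_fin] using
      finrank_ker_infinitesimalAction_rectDiagonal_le (e := Fin.castLEEmb hmn) hpos hinj
  have hsum := finrank_span_tangSet2_add_finrank_span_stabSet2 (m := m) (n := n)
  have hdim : 4 * m * n + ((m - n) * (2 * (m - n) + 1) + 3 * n) =
      m * (2 * m + 1) + n * (2 * n + 1) + n := by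
    obtain ⟨d, rfl⟩ := Nat.exists_eq_add_of_le hmn
    rw [Nat.add_sub_cancel_left]
    ring
  refine ⟨⟨⟨S, ?_⟩, ?_⟩, ⟨⟨S, ?_⟩, ?_⟩⟩
  · linarith [hrange S, hsum S]
  · rintro _ ⟨A, rfl⟩
    linarith [hrange A, hsum A]
  · exact Nat.sub_eq_of_eq_add (by linarith [hrange S, hsum S])
  · rintro _ ⟨A, rfl⟩
    exact Nat.le_sub_of_add_le (hrange A)
end

section
/- Let m ≥ 3 and n ≥ 1 be integers. For B ∈ Matrix (Fin n) (Fin m) ℍ let S(B) = {(X,Y) ∈ 𝔰𝔬(m) × 𝔰𝔭(n) : Y·B = B·(X mapped entrywise into ℍ)}, regarded as a real vector space. Then the minimum over all B of dim_ℝ S(B) equals (m−4n)(m−4n−1)/2 if m > 4n+1, equals (n−m)(2(n−m)+1) if n > m, and equals 0 otherwise. (This is the infinitesimal version of: the identity component of a principal isotropy group of the action of SO(m)×Sp(n) on ℝᵐ ⊗_ℝ ℍⁿ, given by (g,u)·B = u B (gᵀ mapped into ℍ), is SO(m−4n) if m > 4n+1, is Sp(n−m) if n > m ≥ 3, and is trivial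 otherwise.) -/
open Matrix Quaternion

/-- `S(B) = {(X,Y) ∈ 𝔰𝔬(m) × 𝔰𝔭(n) : Y·B = B·X}`, where the real skew-symmetric matrix `X`
is mapped entrywise into the quaternions. -/
def stabSet4 {m n : ℕ} (B : Matrix (Fin n) (Fin m) (Quaternion ℝ)) :
    Set (Matrix (Fin m) (Fin m) ℝ × Matrix (Fin n) (Fin n) (Quaternion ℝ)) :=
  {p | p.1ᵀ = -p.1 ∧ p.2ᴴ = -p.2 ∧ p.2 * B = B * p.1.map (algebraMap ℝ (Quaternion ℝ))}

/-! Identify `ℍⁿ` with `ℝ⁴ⁿ` and write `𝔰𝔬(V)`, `𝔰𝔭(V)` for the skew-Hermitian endomorphisms of `V`.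

For every `B`, real vectors `x` with `B x = 0` form a space of dimension at least `m - 4n`, and row
vectors `y` with `y B = 0` a quaternionic space of dimension at least `n - m`. The copies of
`𝔰𝔬(m - 4n)` and `𝔰𝔭(n - m)` supported on these two spaces lie in the stabilizer of `B`, which gives
the lower bound.

If `(X, Y)` stabilizes `B`, then `X` commutes with the real Gram matrix `Re (Bᴴ B)`. Choose `B` with
orthogonal columns, of pairwise distinct nonzero norms for as long as `ℝ⁴ⁿ` has room for them and
zero afterwards. Then `X` vanishes outside the zero columns, hence `Y B = B X = 0`, and `Y` is
supported on the complement of the column space of `B`: the lower bound is attained. -/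

namespace QuaternionicStabilizer

open Function LinearMap Module

instance {R : Type*} [CommRing R] [StarRing R] [TrivialStar R] : StarModule R ℍ[R] :=
  ⟨fun r q => by rw [Quaternion.star_smul, star_trivial r]⟩

lemma eq_zero_of_mul_eq_zero {κ ι l A : Type*} [Fintype κ] [NonUnitalNonAssocSemiring A]
    {R : Matrix κ ι A} (hR : Injective R.vecMul) {M : Matrix l κ A} (hM : M * R = 0) : M = 0 :=
  funext fun i => hR <| (congr_fun hM i).trans (zero_vecMul R).symm

section SkewHermitian

variable {ι κ A E : Type*}

/-- The real vector space of matrices `Z` with `Zᴴ = -Z`: this is `𝔰𝔬(k)` for `A = ℝ` and `𝔰𝔭(k)`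
for `A = ℍ`. -/
abbrev skewHermitian (ι A : Type*) [AddCommGroup A] [StarAddMonoid A] [Module ℝ A]
    [StarModule ℝ A] : Submodule ℝ (Matrix ι ι A) :=
  skewAdjoint.submodule ℝ (Matrix ι ι A)

section Module

variable [AddCommGroup A] [StarAddMonoid A] [Module ℝ A] [StarModule ℝ A]
  [AddCommGroup E] [StarAddMonoid E] [Module ℝ E] [StarModule ℝ E]

lemma mem_skewHermitian {Z : Matrix ι ι A} : Z ∈ skewHermitian ι A ↔ Zᴴ = -Z := Iff.rfl

lemma star_apply_of_mem_skewHermitian {Z : Matrix ι ι A} (hZ : Z ∈ skewHermitian ι A) (i j : ι) :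
    star (Z j i) = -Z i j :=
  congr_fun₂ hZ i j

lemma apply_eq_zero_comm {Z : Matrix ι ι A} (hZ : Z ∈ skewHermitian ι A) {i j : ι} :
    Z i j = 0 ↔ Z j i = 0 := by
  rw [← star_eq_zero (x := Z j i), star_apply_of_mem_skewHermitian hZ, neg_eq_zero]

/-- A skew-Hermitian matrix is determined by its entries above the diagonal, which are arbitrary,
and its diagonal entries, which are arbitrary skew-adjoint elements. -/
def skewHermitianEquiv [LinearOrder ι] :
    skewHermitian ι A ≃ₗ[ℝ] ({p : ι × ι // p.1 < p.2} → A) × (ι → skewAdjoint.submodule ℝ A) where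
  toFun Z := (fun p => Z.1 p.1.1 p.1.2, fun i => ⟨Z.1 i i, star_apply_of_mem_skewHermitian Z.2 i i⟩)
  map_add' _ _ := rfl
  map_smul' _ _ := rfl
  invFun q := ⟨of fun i j =>
      if h : i < j then q.1 ⟨(i, j), h⟩
      else if h : j < i then -star (q.1 ⟨(j, i), h⟩)
      else q.2 i, by
    rw [mem_skewHermitian]
    ext i j
    rcases lt_trichotomy i j with h | rfl | h
    · simp [h, h.not_gt]
    · have hdiag : star (q.2 i : A) = -q.2 i := (q.2 i).2
      simp [hdiag]
    · simp [h, h.not_gt]⟩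
  left_inv Z := by
    ext i j
    rcases lt_trichotomy i j with h | rfl | h
    · simp [h]
    · simp
    · simp [h, h.not_gt, star_apply_of_mem_skewHermitian Z.2 i j]
  right_inv q := by
    ext p
    · simp [p.2]
    · simp

lemma finrank_skewHermitian [Fintype ι] [LinearOrder ι] [Module.Finite ℝ A] :
    finrank ℝ (skewHermitian ι A) = (Fintype.card ι).choose 2 * finrank ℝ A +
      Fintype.card ι * finrank ℝ (skewAdjoint.submodule ℝ A) := by
  rw [skewHermitianEquiv.finrank_eq, finrank_prod, finrank_pi_fintype, finrank_pi_fintype]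
  simp [Fintype.card_subtype, Fintype.card_product_filter_lt]

/-- Restriction of skew-Hermitian matrices to the rows and columns selected by `σ`. -/
def skewSubmatrix (σ : κ → ι) : skewHermitian ι A →ₗ[ℝ] skewHermitian κ A where
  toFun Z := ⟨Z.1.submatrix σ σ, by
    rw [mem_skewHermitian, conjTranspose_submatrix, mem_skewHermitian.1 Z.2, submatrix_neg]; rfl⟩
  map_add' _ _ := rfl
  map_smul' _ _ := rfl

lemma eq_zero_of_skewSubmatrix_eq_zero {s : ι → Prop} {Z : skewHermitian ι A}
    (hs : ∀ i j, ¬ s j → Z.1 i j = 0)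
    (hZ : skewSubmatrix (Subtype.val : Subtype s → ι) Z = 0) : Z = 0 := by
  ext i j
  by_cases hj : s j
  · by_cases hi : s i
    · exact congr_fun₂ (congr_arg Subtype.val hZ) ⟨i, hi⟩ ⟨j, hj⟩
    · exact (apply_eq_zero_comm Z.2).2 (hs j i hi)
  · exact hs i j hj

lemma finrank_le_of_apply_eq_zero [Finite ι] [Finite κ] [Module.Finite ℝ A] [Module.Finite ℝ E]
    {s : ι → Prop} {t : κ → Prop} {P : Submodule ℝ (skewHermitian ι A × skewHermitian κ E)}
    (hs : ∀ p ∈ P, ∀ i j, ¬ s j → p.1.1 i j = 0) (ht : ∀ p ∈ P, ∀ a b, ¬ t b → p.2.1 a b = 0) :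
    finrank ℝ P ≤ finrank ℝ (skewHermitian (Subtype s) A) +
      finrank ℝ (skewHermitian (Subtype t) E) := by
  let restrict := (skewSubmatrix (A := A) (Subtype.val : Subtype s → ι)).prodMap
    (skewSubmatrix (A := E) (Subtype.val : Subtype t → κ))
  rw [← finrank_prod]
  refine finrank_le_finrank_of_injective (f := restrict.domRestrict P) ?_
  refine (injective_iff_map_eq_zero _).2 fun p hp => ?_
  obtain ⟨hp₁, hp₂⟩ := Prod.ext_iff.1 hp
  exact Subtype.ext <| Prod.ext (eq_zero_of_skewSubmatrix_eq_zero (hs p p.2) hp₁)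
    (eq_zero_of_skewSubmatrix_eq_zero (ht p p.2) hp₂)

end Module

variable [Ring A] [StarRing A] [Algebra ℝ A] [StarModule ℝ A]

/-- The congruence `Z ↦ Rᴴ * Z * R`, which transports skew-Hermitian matrices along the (not
necessarily square) matrix `R`. -/
def skewCongr [Fintype κ] (R : Matrix κ ι A) : skewHermitian κ A →ₗ[ℝ] skewHermitian ι A where
  toFun Z := ⟨Rᴴ * Z.1 * R, by
    simp [mem_skewHermitian, conjTranspose_mul, mem_skewHermitian.1 Z.2, Matrix.mul_assoc]⟩
  map_add' _ _ := by ext1; simp [Matrix.mul_add, Matrix.add_mul]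
  map_smul' _ _ := by ext1; simp

lemma skewCongr_injective [Fintype κ] {R : Matrix κ ι A} (hR : Injective R.vecMul) :
    Injective (skewCongr R) := by
  refine (injective_iff_map_eq_zero _).2 fun Z hZ => Subtype.ext ?_
  have hRZ : Rᴴ * Z.1 = 0 := eq_zero_of_mul_eq_zero hR (congr_arg Subtype.val hZ)
  have hZR : Z.1ᴴ * R = 0 := by simpa using congr_arg conjTranspose hRZ
  exact conjTranspose_eq_zero.1 (eq_zero_of_mul_eq_zero hR hZR)

end SkewHermitian

section Dimensions

variable {ι : Type*} [Fintype ι] [LinearOrder ι]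

lemma finrank_skewAdjoint_real : finrank ℝ (skewAdjoint.submodule ℝ ℝ) = 0 := by
  have : skewAdjoint.submodule ℝ ℝ = ⊥ := by
    ext x
    exact self_eq_neg
  rw [this, finrank_bot]

lemma finrank_skewAdjoint_quaternion : finrank ℝ (skewAdjoint.submodule ℝ ℍ[ℝ]) = 3 := by
  let re : ℍ[ℝ] →ₗ[ℝ] ℝ := QuaternionAlgebra.reₗ _ _ _
  have hker : skewAdjoint.submodule ℝ ℍ[ℝ] = ker re := by
    ext q
    exact Quaternion.star_eq_neg
  have hrange : range re = ⊤ := range_eq_top.2 fun r => ⟨r, rfl⟩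
  have := re.finrank_range_add_finrank_ker
  rw [hrange, finrank_top, finrank_self, Quaternion.finrank_eq_four, ← hker] at this
  lia

lemma finrank_skewHermitian_real :
    finrank ℝ (skewHermitian ι ℝ) = Fintype.card ι * (Fintype.card ι - 1) / 2 := by
  simp [finrank_skewHermitian, finrank_skewAdjoint_real, Nat.choose_two_right]

lemma finrank_skewHermitian_quaternion :
    finrank ℝ (skewHermitian ι ℍ[ℝ]) = Fintype.card ι * (2 * Fintype.card ι + 1) := by
  rw [finrank_skewHermitian, finrank_skewAdjoint_quaternion, Quaternion.finrank_eq_four]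
  generalize Fintype.card ι = k
  have h : k.choose 2 * 2 + k = k * k := by
    rw [Nat.choose_two_right, Nat.div_two_mul_two_of_even k.even_mul_pred_self]
    cases k <;> grind
  linarith

end Dimensions

section Stabilizer

variable {μ ν : Type*} [Fintype μ] [Fintype ν]

/-- The derivative `(X, Y) ↦ Y B - B X` of the orbit map of `SO(μ) × Sp(ν)` at `B`; its kernel is
the infinitesimal stabilizer of `B`. -/
noncomputable def infinitesimalAction (B : Matrix ν μ ℍ[ℝ]) :
    skewHermitian μ ℝ × skewHermitian ν ℍ[ℝ] →ₗ[ℝ] Matrix ν μ ℍ[ℝ] where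
  toFun p := p.2.1 * B - B * p.1.1.map (algebraMap ℝ ℍ[ℝ])
  map_add' p q := by
    simp [Matrix.map_add, Matrix.mul_add, Matrix.add_mul, add_sub_add_comm]
  map_smul' c p := by
    have : (c • p.1.1).map (algebraMap ℝ ℍ[ℝ]) = c • p.1.1.map (algebraMap ℝ ℍ[ℝ]) :=
      map_smul (Algebra.linearMap ℝ ℍ[ℝ]).mapMatrix c p.1.1
    simp only [Prod.smul_fst, Prod.smul_snd, SetLike.val_smul, this, Matrix.smul_mul,
      Matrix.mul_smul, smul_sub, RingHom.id_apply]

lemma mem_ker_infinitesimalAction {B : Matrix ν μ ℍ[ℝ]}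
    {p : skewHermitian μ ℝ × skewHermitian ν ℍ[ℝ]} :
    p ∈ ker (infinitesimalAction B) ↔ p.2.1 * B = B * p.1.1.map (algebraMap ℝ ℍ[ℝ]) :=
  sub_eq_zero

lemma finrank_span_stabSet4 {m n : ℕ} (B : Matrix (Fin n) (Fin m) ℍ[ℝ]) :
    finrank ℝ (Submodule.span ℝ (stabSet4 B)) = finrank ℝ (ker (infinitesimalAction B)) := by
  let incl := (skewHermitian (Fin m) ℝ).subtype.prodMap (skewHermitian (Fin n) ℍ[ℝ]).subtype
  have hincl : Injective incl := Subtype.val_injective.prodMap Subtype.val_injective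
  have himage : stabSet4 B = (ker (infinitesimalAction B)).map incl := by
    ext ⟨X, Y⟩
    constructor
    · rintro ⟨hX, hY, h⟩
      exact ⟨(⟨X, hX⟩, ⟨Y, hY⟩), mem_ker_infinitesimalAction.2 h, rfl⟩
    · rintro ⟨p, hp, hpXY⟩
      obtain ⟨rfl, rfl⟩ := Prod.ext_iff.1 hpXY
      exact ⟨p.1.2, p.2.2, mem_ker_infinitesimalAction.1 hp⟩
  rw [himage, Submodule.span_eq]
  exact (Submodule.equivMapOfInjective incl hincl _).finrank_eq.symm

section LowerBound

lemma exists_injective_vecMul_forall_map_eq_zero {K W ι : Type*} [DivisionRing K] [Fintype ι]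
    [AddCommGroup W] [Module K W] [Module.Finite K W] (f : (ι → K) →ₗ[K] W)
    {k : ℕ} (hk : k ≤ Fintype.card ι - finrank K W) :
    ∃ R : Matrix (Fin k) ι K, Injective R.vecMul ∧ ∀ i, f (R i) = 0 := by
  have hker : k ≤ finrank K (ker f) := by
    have hrank := f.finrank_range_add_finrank_ker
    have hrange := (range f).finrank_le
    rw [finrank_fintype_fun_eq_card] at hrank
    lia
  obtain ⟨v, hv⟩ := exists_linearIndependent_of_le_finrank hker
  exact ⟨of fun i => v i, vecMul_injective_iff.2 (hv.map' _ (ker f).ker_subtype), fun i => (v i).2⟩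

lemma skewCongr_mem_ker_infinitesimalAction {κ l : Type*} [Fintype κ] [Fintype l]
    {B : Matrix ν μ ℍ[ℝ]} {R : Matrix κ μ ℝ} (hR : R.map (algebraMap ℝ ℍ[ℝ]) * Bᴴ = 0)
    {Q : Matrix l ν ℍ[ℝ]} (hQ : Q * B = 0) (p : skewHermitian κ ℝ × skewHermitian l ℍ[ℝ]) :
    (skewCongr R p.1, skewCongr Q p.2) ∈ ker (infinitesimalAction B) := by
  have hBR : B * Rᴴ.map (algebraMap ℝ ℍ[ℝ]) = 0 := by
    rw [conjTranspose_map]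
    · simpa using congr_arg conjTranspose hR
    · intro r; simp
  rw [mem_ker_infinitesimalAction]
  simp only [skewCongr, coe_mk, AddHom.coe_mk, Matrix.map_mul, Matrix.mul_assoc, hQ,
    Matrix.mul_zero]
  rw [← Matrix.mul_assoc, hBR, Matrix.zero_mul]

theorem finrank_le_finrank_ker_infinitesimalAction (B : Matrix ν μ ℍ[ℝ]) :
    finrank ℝ (skewHermitian (Fin (Fintype.card μ - 4 * Fintype.card ν)) ℝ) +
      finrank ℝ (skewHermitian (Fin (Fintype.card ν - Fintype.card μ)) ℍ[ℝ]) ≤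
      finrank ℝ (ker (infinitesimalAction B)) := by
  obtain ⟨R, hR_inj, hR⟩ := exists_injective_vecMul_forall_map_eq_zero
    (Bᴴ.vecMulLinear.restrictScalars ℝ ∘ₗ (Algebra.linearMap ℝ ℍ[ℝ]).compLeft μ)
    (k := Fintype.card μ - 4 * Fintype.card ν)
    (by simp [finrank_pi_fintype, Quaternion.finrank_eq_four, mul_comm])
  obtain ⟨Q, hQ_inj, hQ⟩ := exists_injective_vecMul_forall_map_eq_zero B.vecMulLinear
    (k := Fintype.card ν - Fintype.card μ) (by simp)
  rw [← finrank_prod]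
  refine finrank_le_finrank_of_injective
    (f := ((skewCongr R).prodMap (skewCongr Q)).codRestrict _ <|
      skewCongr_mem_ker_infinitesimalAction (funext hR) (funext hQ)) ?_
  exact .codRestrict _ ((skewCongr_injective hR_inj).prodMap (skewCongr_injective hQ_inj))

end LowerBound

section UpperBound

/-- The real part of a quaternion, as a linear map. -/
abbrev quaternionRe : ℍ[ℝ] →ₗ[ℝ] ℝ := QuaternionAlgebra.reₗ _ _ _

/-- The Gram matrix of the columns of `B` for the real inner product on `ℍⁿ = ℝ⁴ⁿ`. -/
noncomputable def realGram (B : Matrix ν μ ℍ[ℝ]) : Matrix μ μ ℝ := (Bᴴ * B).map quaternionRe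

lemma map_re_map_algebraMap_mul {κ l : Type*} (X : Matrix κ μ ℝ) (M : Matrix μ l ℍ[ℝ]) :
    (X.map (algebraMap ℝ ℍ[ℝ]) * M).map quaternionRe = X * M.map quaternionRe := by
  ext i j
  simp only [map_apply, mul_apply, map_sum, ← Algebra.smul_def, map_smul, smul_eq_mul]

lemma map_re_mul_map_algebraMap {κ l : Type*} (M : Matrix κ μ ℍ[ℝ]) (X : Matrix μ l ℝ) :
    (M * X.map (algebraMap ℝ ℍ[ℝ])).map quaternionRe = M.map quaternionRe * X := by
  ext i j
  simp only [map_apply, mul_apply, map_sum, ← Algebra.commutes, ← Algebra.smul_def, map_smul,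
    smul_eq_mul, mul_comm]

lemma commute_realGram {B : Matrix ν μ ℍ[ℝ]} {p : skewHermitian μ ℝ × skewHermitian ν ℍ[ℝ]}
    (hp : p ∈ ker (infinitesimalAction B)) : Commute p.1.1 (realGram B) := by
  obtain ⟨⟨X, hX⟩, ⟨Y, hY⟩⟩ := p
  let X' := X.map (algebraMap ℝ ℍ[ℝ])
  have hYB : Y * B = B * X' := mem_ker_infinitesimalAction.1 hp
  have hX' : X'ᴴ = -X' := by
    rw [← conjTranspose_map _ (fun r => by simp), mem_skewHermitian.1 hX]
    ext1; simp [X']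
  have hBY : Bᴴ * Y = X' * Bᴴ := by
    simpa [conjTranspose_mul, hX', mem_skewHermitian.1 hY] using congr_arg conjTranspose hYB
  have hcomm : X' * (Bᴴ * B) = Bᴴ * B * X' := by
    rw [← Matrix.mul_assoc, ← hBY, Matrix.mul_assoc, hYB, Matrix.mul_assoc]
  rw [commute_iff_eq, realGram, ← map_re_map_algebraMap_mul, hcomm, map_re_mul_map_algebraMap]

lemma apply_eq_zero_of_realGram_eq_diagonal [DecidableEq μ] {B : Matrix ν μ ℍ[ℝ]} {c : μ → ℝ}
    (hB : realGram B = diagonal c) {p : skewHermitian μ ℝ × skewHermitian ν ℍ[ℝ]}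
    (hp : p ∈ ker (infinitesimalAction B)) {i j : μ} (hij : c i ≠ c j) : p.1.1 i j = 0 := by
  have hcomm := congr_fun₂ (commute_realGram hp).eq i j
  rw [hB, mul_diagonal, diagonal_mul, mul_comm] at hcomm
  exact (mul_eq_mul_right_iff.1 hcomm).resolve_left hij.symm

end UpperBound

end Stabilizer

section GenericPoint

/-- The quaternions `1, i, j, k`. -/
def quaternionUnit : Fin 4 → ℍ[ℝ] := ![1, ⟨0, 1, 0, 0⟩, ⟨0, 0, 1, 0⟩, ⟨0, 0, 0, 1⟩]

lemma re_star_quaternionUnit_mul (c d : Fin 4) :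
    (star (quaternionUnit c) * quaternionUnit d).re = if c = d then 1 else 0 := by
  rw [Quaternion.re_mul, Quaternion.re_star, Quaternion.imI_star, Quaternion.imJ_star,
    Quaternion.imK_star]
  fin_cases c <;> fin_cases d <;> simp [quaternionUnit]

/-- The norm of the `j`-th column of `genericPoint`; the truncated subtraction makes it vanish for
`4 * n ≤ j`. -/
def columnNorm (n j : ℕ) : ℝ := (4 * n - j : ℕ)

/-- A matrix whose first `4 * n` columns are multiples, with pairwise distinct positive
coefficients, of the real orthonormal basis `e_a u` of `ℍⁿ` (with `u = 1, i, j, k` and `e_a` the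
standard basis vectors, those with `u = 1` coming first), and whose other columns vanish. -/
noncomputable def genericPoint (m n : ℕ) : Matrix (Fin n) (Fin m) ℍ[ℝ] :=
  of fun a j => columnNorm n j • if j % n = a then quaternionUnit (Fin.ofNat 4 (j / n)) else 0

lemma columnNorm_eq_zero {n j : ℕ} (hj : 4 * n ≤ j) : columnNorm n j = 0 := by
  simp [columnNorm, hj]

lemma columnNorm_pos {n j : ℕ} (hj : j < 4 * n) : 0 < columnNorm n j :=
  Nat.cast_pos.2 (Nat.sub_pos_of_lt hj)

lemma columnNorm_inj {n i j : ℕ} (h : columnNorm n i = columnNorm n j) (hj : j < 4 * n) :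
    i = j := by
  rw [columnNorm, columnNorm, Nat.cast_inj] at h
  lia

lemma mod_eq_and_ofNat_div_eq_iff {n i j : ℕ} (hi : i < 4 * n) (hj : j < 4 * n) :
    j % n = i % n ∧ Fin.ofNat 4 (i / n) = Fin.ofNat 4 (j / n) ↔ i = j := by
  refine ⟨fun ⟨hmod, hdiv⟩ => ?_, by rintro rfl; simp⟩
  have hdiv_lt {k : ℕ} (hk : k < 4 * n) : k / n < 4 := Nat.div_lt_of_lt_mul (mul_comm 4 n ▸ hk)
  rw [Fin.ext_iff, Fin.val_ofNat, Fin.val_ofNat, Nat.mod_eq_of_lt (hdiv_lt hi),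
    Nat.mod_eq_of_lt (hdiv_lt hj)] at hdiv
  rw [← Nat.div_add_mod i n, ← Nat.div_add_mod j n, hmod, hdiv]

lemma re_star_genericPoint_mul {m n : ℕ} (a : Fin n) (i j : Fin m) :
    (star (genericPoint m n a i) * genericPoint m n a j).re =
      if i % n = a ∧ j % n = a ∧ Fin.ofNat 4 (i / n) = Fin.ofNat 4 (j / n) then
        columnNorm n i * columnNorm n j else 0 := by
  by_cases hi : i % n = a <;> by_cases hj : j % n = a <;>
    simp only [genericPoint, of_apply, hi, hj, if_true, if_false, true_and, false_and,
      Quaternion.star_smul, smul_mul_smul_comm, Quaternion.re_smul, re_star_quaternionUnit_mul,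
      smul_eq_mul, mul_ite, mul_one, mul_zero, smul_zero, zero_mul, star_zero, Quaternion.re_zero]

lemma realGram_genericPoint (m n : ℕ) :
    realGram (genericPoint m n) = diagonal fun j : Fin m => columnNorm n j ^ 2 := by
  ext i j
  have hsum : realGram (genericPoint m n) i j =
      ∑ a : Fin n, (star (genericPoint m n a i) * genericPoint m n a j).re :=
    map_sum quaternionRe _ _
  rw [hsum]
  simp only [re_star_genericPoint_mul]
  by_cases hi : i < 4 * n
  · by_cases hj : j < 4 * n
    · have hn : 0 < n := by lia
      rw [Finset.sum_eq_single ⟨i % n, Nat.mod_lt _ hn⟩ (by grind) (by simp)]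
      simp only [true_and, mod_eq_and_ofNat_div_eq_iff hi hj, Fin.val_inj]
      obtain rfl | hij := eq_or_ne i j
      · simp [sq]
      · simp [hij]
    · rw [diagonal_apply_ne _ (by lia)]
      simp [columnNorm_eq_zero (not_lt.1 hj)]
  · simp [columnNorm_eq_zero (not_lt.1 hi), diagonal_apply]

variable {m n : ℕ} {p : skewHermitian (Fin m) ℝ × skewHermitian (Fin n) ℍ[ℝ]}

lemma fst_apply_eq_zero_of_mem_ker (hp : p ∈ ker (infinitesimalAction (genericPoint m n)))
    (i : Fin m) {j : Fin m} (hj : j < 4 * n) : p.1.1 i j = 0 := by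
  obtain rfl | hij := eq_or_ne i j
  · exact self_eq_neg.1 (star_apply_of_mem_skewHermitian p.1.2 i i)
  · refine apply_eq_zero_of_realGram_eq_diagonal (realGram_genericPoint m n) hp fun hsq => hij ?_
    exact Fin.ext (columnNorm_inj ((sq_eq_sq₀ (Nat.cast_nonneg _) (Nat.cast_nonneg _)).1 hsq) hj)

lemma mul_genericPoint_apply (Y : Matrix (Fin n) (Fin n) ℍ[ℝ]) (a b : Fin n) (hb : b < m) :
    (Y * genericPoint m n) a ⟨b, hb⟩ = columnNorm n b • Y a b := by
  simp [mul_apply, genericPoint, Nat.mod_eq_of_lt, Nat.div_eq_of_lt, Fin.val_inj, quaternionUnit]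

lemma snd_mul_eq_zero_of_mem_ker (hp : p ∈ ker (infinitesimalAction (genericPoint m n))) :
    p.2.1 * genericPoint m n = 0 := by
  rw [mem_ker_infinitesimalAction.1 hp]
  ext1 a j
  rw [mul_apply, Matrix.zero_apply]
  refine Finset.sum_eq_zero fun i _ => ?_
  obtain hi | hi := lt_or_ge i.1 (4 * n)
  · simp [(apply_eq_zero_comm p.1.2).2 (fst_apply_eq_zero_of_mem_ker hp j hi)]
  · simp [genericPoint, columnNorm_eq_zero hi]

lemma snd_apply_eq_zero_of_mem_ker (hp : p ∈ ker (infinitesimalAction (genericPoint m n)))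
    (a : Fin n) {b : Fin n} (hb : b < m) : p.2.1 a b = 0 := by
  have h := mul_genericPoint_apply p.2.1 a b hb
  rw [snd_mul_eq_zero_of_mem_ker hp] at h
  exact (smul_eq_zero.1 h.symm).resolve_left (columnNorm_pos (by lia)).ne'

theorem finrank_ker_infinitesimalAction_genericPoint_le (m n : ℕ) :
    finrank ℝ (ker (infinitesimalAction (genericPoint m n))) ≤
      finrank ℝ (skewHermitian (Fin (m - 4 * n)) ℝ) +
      finrank ℝ (skewHermitian (Fin (n - m)) ℍ[ℝ]) := by
  refine (finrank_le_of_apply_eq_zero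
    (s := fun j : Fin m => ¬ j < 4 * n) (t := fun b : Fin n => ¬ b < m)
    (fun p hp i j hj => fst_apply_eq_zero_of_mem_ker hp i (not_not.1 hj))
    (fun p hp a b hb => snd_apply_eq_zero_of_mem_ker hp a (not_not.1 hb))).trans_eq ?_
  have h (k l : ℕ) : Fintype.card {i : Fin k // ¬ i < l} = k - l := by
    rw [Fintype.card_subtype_compl, Fintype.card_subtype, Fin.card_filter_val_lt, Fintype.card_fin]
    lia
  simp only [finrank_skewHermitian_real, finrank_skewHermitian_quaternion, h, Fintype.card_fin]

theorem isLeast_finrank_ker_infinitesimalAction (m n : ℕ) :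
    IsLeast (Set.range fun B : Matrix (Fin n) (Fin m) ℍ[ℝ] =>
        finrank ℝ (ker (infinitesimalAction B)))
      (finrank ℝ (skewHermitian (Fin (m - 4 * n)) ℝ) +
        finrank ℝ (skewHermitian (Fin (n - m)) ℍ[ℝ])) := by
  have hle (B : Matrix (Fin n) (Fin m) ℍ[ℝ]) : finrank ℝ (skewHermitian (Fin (m - 4 * n)) ℝ) +
      finrank ℝ (skewHermitian (Fin (n - m)) ℍ[ℝ]) ≤ finrank ℝ (ker (infinitesimalAction B)) := by
    simpa only [finrank_skewHermitian_real, finrank_skewHermitian_quaternion, Fintype.card_fin]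
      using finrank_le_finrank_ker_infinitesimalAction B
  exact ⟨⟨genericPoint m n,
    (finrank_ker_infinitesimalAction_genericPoint_le m n).antisymm (hle _)⟩,
    Set.forall_mem_range.2 hle⟩

end GenericPoint

end QuaternionicStabilizer

open QuaternionicStabilizer

theorem stmt4_general (m n : ℕ) :
    IsLeast {d : ℕ | ∃ B : Matrix (Fin n) (Fin m) (Quaternion ℝ),
        d = Module.finrank ℝ (Submodule.span ℝ (stabSet4 B))}
      (if 4 * n + 1 < m then (m - 4 * n) * (m - 4 * n - 1) / 2
       else if m < n then (n - m) * (2 * (n - m) + 1) else 0) := by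
  convert isLeast_finrank_ker_infinitesimalAction m n using 1
  · ext d
    simp only [finrank_span_stabSet4, Set.mem_ofPred_eq, Set.mem_range, eq_comm]
  · rw [finrank_skewHermitian_real, finrank_skewHermitian_quaternion, Fintype.card_fin,
      Fintype.card_fin]
    split_ifs with hmn hnm
    · simp [show n - m = 0 by lia]
    · simp [show m - 4 * n = 0 by lia]
    · simp [show n - m = 0 by lia, show m - 4 * n - 1 = 0 by lia]

theorem stmt4 (m n : ℕ) (hm : 3 ≤ m) (hn : 1 ≤ n) :
    IsLeast {d : ℕ | ∃ B : Matrix (Fin n) (Fin m) (Quaternion ℝ),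
        d = Module.finrank ℝ (Submodule.span ℝ (stabSet4 B))}
      (if 4 * n + 1 < m then (m - 4 * n) * (m - 4 * n - 1) / 2
       else if m < n then (n - m) * (2 * (n - m) + 1) else 0) :=
  stmt4_general m n
end

section
/- Let m ≥ 2 and n ≥ 1 be integers. Consider the action of SO(m)×Sp(1)×Sp(n) on Matrix (Fin n) (Fin m) ℍ given by (g,q,u)·B = u · B′ · (gᵀ mapped entrywise into ℍ), where B′ is B with every entry multiplied on the right by the conjugate of the unit quaternion q. For B ∈ Matrix (Fin n) (Fin m) ℍ let S(B) = {(X,s,Y) ∈ 𝔰𝔬(m) × Im(ℍ) × 𝔰𝔭(n) : Y·B − B·(X mapped into ℍ) = B·ᵣs}, where B·ᵣs denotes entrywise right multiplication of B by s. Then: if m ≥ 3, the minimum over all B of dim_ℝ S(B) equals (m−4n)(m−4n−1)/2 if m > 4n+1, equals (n−m)(2(n−m)+1) if n > m, and equals 0 otherwise; if m = 2 and n ≥ 2, the minimum equals 1 + (n−2)(2(n−2)+1). (Infinitesimally, the identity component of a principal isotropy group of (SO(m)×Sp(1)Sp(n), ℝᵐ ⊗_ℝ ℝ⁴ⁿ)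 is SO(m−4n) if m > 4n+1, Sp(n−m) if n > m ≥ 3, trivial otherwise for m ≥ 3, and is U(1)×Sp(n−2) when m = 2, n ≥ 2.) -/
open Matrix Quaternion

/-- `S(B) = {(X,s,Y) ∈ 𝔰𝔬(m) × Im(ℍ) × 𝔰𝔭(n) : Y·B − B·X = B·ᵣs}`, where the real
skew-symmetric matrix `X` is mapped entrywise into the quaternions and `B·ᵣs` denotes
entrywise right multiplication by the purely imaginary quaternion `s`. -/
def stabSet5 {m n : ℕ} (B : Matrix (Fin n) (Fin m) (Quaternion ℝ)) :
    Set (Matrix (Fin m) (Fin m) ℝ × Quaternion ℝ × Matrix (Fin n) (Fin n) (Quaternion ℝ)) :=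
  {p | p.1ᵀ = -p.1 ∧ p.2.1.re = 0 ∧ p.2.2ᴴ = -p.2.2 ∧
    p.2.2 * B - B * p.1.map (algebraMap ℝ (Quaternion ℝ)) = B.map (fun q => q * p.2.1)}

/-!
Write the condition on `(X, s, Y)` as `Y * B = B * (X + s)`. Then `X + s` commutes with `Bᴴ * B`,
and taking real parts, `X` commutes with the real Gram matrix of the columns of `B`.

For every `B` there are at least `m - 4 * n` real relations between the columns and at least
`n - m` quaternionic relations between the rows, which give copies of `𝔰𝔬(m - 4n)` and `𝔰𝔭(n - m)`
in the stabilizer. If `m = 2`, the matrix `Bᴴ * B` has only one off-diagonal entry up to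
conjugation, so it commutes with some nonzero imaginary `s`, and `s` lifts to the stabilizer by
means of the orthogonal projection onto the column space of `B`.

Conversely, take columns which are pairwise orthogonal for the real inner product and rescale them
so that their nonzero lengths become distinct: then `X` is supported on the zero columns. If the
columns contain the standard basis, `Y` is the scalar `s` plus an element of `𝔰𝔭(n - m)`, so that
`s` commutes with all entries; letting these include `i`, and `j` if `m ≥ 3`, leaves only the
multiples of `i` if `m = 2` and nothing if `m ≥ 3`.
-/

section LinearAlgebra

variable {K V W : Type*} [DivisionRing K] [AddCommGroup V] [Module K V] [AddCommGroup W]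
  [Module K W]

lemma finrank_sub_finrank_le_finrank_ker [FiniteDimensional K V] [FiniteDimensional K W]
    (f : V →ₗ[K] W) :
    Module.finrank K V - Module.finrank K W ≤ Module.finrank K (LinearMap.ker f) := by
  have := f.finrank_range_add_finrank_ker
  have := (LinearMap.range f).finrank_le
  omega

lemma finrank_le_finrank_of_mapsTo (f : V →ₗ[K] W) {S : Submodule K V} {T : Submodule K W}
    [FiniteDimensional K T] (hST : ∀ x ∈ S, f x ∈ T) (hker : ∀ x ∈ S, f x = 0 → x = 0) :
    Module.finrank K S ≤ Module.finrank K T := by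
  refine LinearMap.finrank_le_finrank_of_injective (f := f.restrict hST) ?_
  refine (injective_iff_map_eq_zero _).2 fun x hx => Subtype.ext (hker x x.2 ?_)
  exact congrArg Subtype.val hx

lemma finrank_submodule_prod [FiniteDimensional K V] [FiniteDimensional K W]
    (S : Submodule K V) (T : Submodule K W) :
    Module.finrank K (S.prod T) = Module.finrank K S + Module.finrank K T := by
  let e : (S.prod T) ≃ₗ[K] S × T :=
    { toFun := fun p => (⟨p.1.1, p.2.1⟩, ⟨p.1.2, p.2.2⟩)
      invFun := fun q => ⟨(q.1, q.2), q.1.2, q.2.2⟩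
      map_add' := fun _ _ => rfl
      map_smul' := fun _ _ => rfl }
  rw [e.finrank_eq, Module.finrank_prod]

lemma exists_comp_comp_eq_self (f : V →ₗ[K] W) : ∃ g : W →ₗ[K] V, f ∘ₗ g ∘ₗ f = f := by
  obtain ⟨r, hr⟩ := f.rangeRestrict.exists_rightInverse_of_surjective f.range_rangeRestrict
  obtain ⟨g, hg⟩ := r.exists_extend
  refine ⟨g, LinearMap.ext fun x => ?_⟩
  have hgf : g (f x) = r (f.rangeRestrict x) := LinearMap.congr_fun hg (f.rangeRestrict x)
  have hfr : f.rangeRestrict (r (f.rangeRestrict x)) = f.rangeRestrict x :=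
    LinearMap.congr_fun hr _
  rw [LinearMap.comp_apply, LinearMap.comp_apply, hgf]
  exact congrArg Subtype.val hfr

variable {ι κ : Type*} [Fintype ι] [Fintype κ]

lemma exists_mul_mul_eq_self (A : Matrix ι κ K) : ∃ C : Matrix κ ι K, A * C * A = A := by
  classical
  obtain ⟨g, hg⟩ := exists_comp_comp_eq_self (toLinearMapRight' A)
  refine ⟨LinearMap.toMatrixRight' g, toLinearMapRight'.injective ?_⟩
  have hgm : toLinearMapRight' (LinearMap.toMatrixRight' g) = g :=
    LinearMap.toMatrixRight'.symm_apply_apply g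
  rw [toLinearMapRight'_mul, toLinearMapRight'_mul, hgm, hg]

lemma exists_rows_mem_of_le_finrank {k : ℕ} (S : Submodule K (ι → K))
    (hk : k ≤ Module.finrank K S) :
    ∃ (V : Matrix (Fin k) ι K) (W : Matrix ι (Fin k) K), (∀ i, V i ∈ S) ∧ V * W = 1 := by
  classical
  obtain ⟨b, hb⟩ := exists_linearIndependent_of_le_finrank hk
  let f : (Fin k → K) →ₗ[K] ι → K := S.subtype ∘ₗ Fintype.linearCombination K b
  have hf : LinearMap.ker f = ⊥ := LinearMap.ker_eq_bot.2
    (Subtype.val_injective.comp (linearIndependent_iff_injective_fintypeLinearCombination.1 hb))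
  obtain ⟨g, hg⟩ := LinearMap.exists_leftInverse_of_injective f hf
  refine ⟨LinearMap.toMatrixRight' f, LinearMap.toMatrixRight' g, fun i => ?_, ?_⟩
  · exact (Fintype.linearCombination K b (Pi.single i 1)).2
  · rw [← LinearMap.toMatrixRight'_comp, hg, LinearMap.toMatrixRight'_id]

end LinearAlgebra

section SkewHermitian

variable {ι κ A : Type*} [Fintype ι] [Fintype κ] [Ring A] [StarRing A]

lemma injective_conjTranspose_mul_mul [DecidableEq κ] {V : Matrix κ ι A} {W : Matrix ι κ A}
    (hVW : V * W = 1) : Function.Injective fun C : Matrix κ κ A => Vᴴ * C * V := by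
  have hWV : Wᴴ * Vᴴ = 1 := by rw [← conjTranspose_mul, hVW, conjTranspose_one]
  refine Function.LeftInverse.injective (g := fun M => Wᴴ * M * W) fun C => ?_
  calc Wᴴ * (Vᴴ * C * V) * W = (Wᴴ * Vᴴ) * C * (V * W) := by simp only [Matrix.mul_assoc]
    _ = C := by rw [hWV, hVW, Matrix.one_mul, Matrix.mul_one]

lemma commute_conjTranspose_mul_self {B : Matrix ι κ A} {Y : Matrix ι ι A} {Z : Matrix κ κ A}
    (hY : Yᴴ = -Y) (hZ : Zᴴ = -Z) (hB : Y * B = B * Z) : Commute (Bᴴ * B) Z := by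
  have hBY : Bᴴ * Y = Z * Bᴴ := by
    have := congrArg conjTranspose hB
    simpa only [conjTranspose_mul, hY, hZ, Matrix.mul_neg, Matrix.neg_mul, neg_inj] using this
  calc Bᴴ * B * Z = Bᴴ * Y * B := by rw [Matrix.mul_assoc, ← hB, Matrix.mul_assoc]
    _ = Z * (Bᴴ * B) := by rw [hBY, Matrix.mul_assoc]

variable {R : Type*} [Field R] [StarRing R] [TrivialStar R] [Algebra R A] [StarModule R A]

/-- A skew-Hermitian matrix is determined by its skew-adjoint diagonal entries and its
unconstrained entries below the diagonal. -/
def skewHermitianEquiv (k : ℕ) : skewAdjoint.submodule R (Matrix (Fin k) (Fin k) A) ≃ₗ[R]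
    (Fin k → skewAdjoint.submodule R A) × ((Σ i : Fin k, Fin i) → A) where
  toFun M := (fun i => ⟨M.1 i i, congrFun₂ M.2 i i⟩, fun p => M.1 p.1 (p.2.castLT (by omega)))
  map_add' _ _ := rfl
  map_smul' _ _ := rfl
  invFun q := ⟨of fun i j =>
    if h : j < i then q.2 ⟨i, ⟨j, h⟩⟩
    else if h : i < j then -star (q.2 ⟨j, ⟨i, h⟩⟩) else q.1 i, by
      change _ = _
      ext i j
      have hdiag : star (q.1 i : A) = -q.1 i := (q.1 i).2
      rcases lt_trichotomy i j with h | rfl | h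
      · simp [star_apply, h, h.not_gt]
      · simp [star_apply, hdiag]
      · simp [star_apply, h, h.not_gt]⟩
  left_inv M := by
    ext i j
    rcases lt_trichotomy i j with h | rfl | h
    · have hM : star (M.1 j i) = -M.1 i j := congrFun₂ M.2 i j
      simp [h, h.not_gt, hM]
    · simp
    · simp [h]
  right_inv q := by
    ext p
    · simp
    · exact dif_pos p.2.2

lemma finrank_skewHermitian [Module.Finite R A] (k : ℕ) :
    Module.finrank R (skewAdjoint.submodule R (Matrix (Fin k) (Fin k) A)) =
      k * Module.finrank R (skewAdjoint.submodule R A) +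
        k * (k - 1) / 2 * Module.finrank R A := by
  rw [(skewHermitianEquiv k).finrank_eq, Module.finrank_prod, Module.finrank_pi_fintype,
    Module.finrank_pi_fintype]
  simp only [Finset.sum_const, Finset.card_univ, Fintype.card_fin, Fintype.card_sigma,
    smul_eq_mul]
  rw [Fin.sum_univ_eq_sum_range (fun i => i), Finset.sum_range_id]

end SkewHermitian

instance instStarModuleQuaternion {R : Type*} [CommRing R] [StarRing R] [TrivialStar R] :
    StarModule R ℍ[R] :=
  ⟨fun a x => by simp⟩

lemma finrank_so_s5 (k : ℕ) :
    Module.finrank ℝ (skewAdjoint.submodule ℝ (Matrix (Fin k) (Fin k) ℝ)) = k * (k - 1) / 2 := by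
  have hbot : skewAdjoint.submodule ℝ ℝ = ⊥ :=
    (Submodule.eq_bot_iff _).2 fun _ hx => self_eq_neg.1 hx
  rw [finrank_skewHermitian, hbot, finrank_bot, Module.finrank_self, mul_zero, zero_add, mul_one]

lemma mem_skewAdjoint_quaternion {s : ℍ[ℝ]} : s ∈ skewAdjoint.submodule ℝ ℍ[ℝ] ↔ s.re = 0 :=
  Quaternion.star_eq_neg

/-- The real part of a quaternion, as a real-linear map. -/
def quaternionRe : ℍ[ℝ] →ₗ[ℝ] ℝ := QuaternionAlgebra.reₗ _ _ _

lemma quaternionRe_apply (x : ℍ[ℝ]) : quaternionRe x = x.re := rfl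

lemma finrank_skewAdjoint_quaternion :
    Module.finrank ℝ (skewAdjoint.submodule ℝ ℍ[ℝ]) = 3 := by
  have hker : LinearMap.ker quaternionRe = skewAdjoint.submodule ℝ ℍ[ℝ] :=
    Submodule.ext fun _ => mem_skewAdjoint_quaternion.symm
  have hrange : LinearMap.range quaternionRe = ⊤ := LinearMap.range_eq_top.2 fun x => ⟨x, rfl⟩
  have := quaternionRe.finrank_range_add_finrank_ker
  rw [hker, hrange, finrank_top, Module.finrank_self, Quaternion.finrank_eq_four] at this
  omega

/-- The quaternion units `1, i, j, k`. -/
@[simps]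
def quaternionUnit (p : Fin 4) : ℍ[ℝ] where
  re := if p = 0 then 1 else 0
  imI := if p = 1 then 1 else 0
  imJ := if p = 2 then 1 else 0
  imK := if p = 3 then 1 else 0

lemma quaternionUnit_zero : quaternionUnit 0 = 1 := by
  ext <;> simp

lemma re_star_mul_quaternionUnit (p q : Fin 4) :
    (star (quaternionUnit p) * quaternionUnit q).re = if p = q then 1 else 0 := by
  fin_cases p <;> fin_cases q <;> simp

lemma quaternionUnit_ne_zero (p : Fin 4) : quaternionUnit p ≠ 0 := fun h => by
  have := re_star_mul_quaternionUnit p p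
  simp [h] at this

lemma im_eq_zero_of_commute_quaternionUnit_one {s : ℍ[ℝ]} (h : Commute s (quaternionUnit 1)) :
    s.imJ = 0 ∧ s.imK = 0 := by
  have hJ : s.imK = -s.imK := by simpa using congrArg (·.imJ) h.eq
  have hK : -s.imJ = s.imJ := by simpa using congrArg (·.imK) h.eq
  exact ⟨neg_eq_self.1 hK, self_eq_neg.1 hJ⟩

lemma im_eq_zero_of_commute_quaternionUnit_two {s : ℍ[ℝ]} (h : Commute s (quaternionUnit 2)) :
    s.imI = 0 ∧ s.imK = 0 := by
  have hI : -s.imK = s.imK := by simpa using congrArg (·.imI) h.eq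
  have hK : s.imI = -s.imI := by simpa using congrArg (·.imK) h.eq
  exact ⟨self_eq_neg.1 hK, neg_eq_self.1 hI⟩

lemma finrank_sp (k : ℕ) :
    Module.finrank ℝ (skewAdjoint.submodule ℝ (Matrix (Fin k) (Fin k) ℍ[ℝ])) =
      k * (2 * k + 1) := by
  rw [finrank_skewHermitian, finrank_skewAdjoint_quaternion, Quaternion.finrank_eq_four]
  obtain ⟨c, hc⟩ := (Nat.even_mul_pred_self k).two_dvd
  rw [hc, Nat.mul_div_cancel_left _ two_pos]
  cases k with
  | zero => omega
  | succ k => rw [Nat.add_sub_cancel] at hc; linarith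

/-- The subspace `𝔰𝔬(μ) × T × 𝔰𝔭(ν)`; infinitesimal stabilizers are bounded from both sides by
such products. -/
noncomputable def skewTriple (μ ν : ℕ) (T : Submodule ℝ ℍ[ℝ]) :
    Submodule ℝ (Matrix (Fin μ) (Fin μ) ℝ × ℍ[ℝ] × Matrix (Fin ν) (Fin ν) ℍ[ℝ]) :=
  (skewAdjoint.submodule ℝ _).prod (T.prod (skewAdjoint.submodule ℝ _))

lemma mem_skewTriple {μ ν : ℕ} {T : Submodule ℝ ℍ[ℝ]} {X : Matrix (Fin μ) (Fin μ) ℝ} {s : ℍ[ℝ]}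
    {Y : Matrix (Fin ν) (Fin ν) ℍ[ℝ]} :
    (X, s, Y) ∈ skewTriple μ ν T ↔ Xᵀ = -X ∧ s ∈ T ∧ Yᴴ = -Y :=
  Iff.rfl

lemma finrank_skewTriple (μ ν : ℕ) (T : Submodule ℝ ℍ[ℝ]) :
    Module.finrank ℝ (skewTriple μ ν T) =
      μ * (μ - 1) / 2 + (Module.finrank ℝ T + ν * (2 * ν + 1)) := by
  rw [skewTriple, finrank_submodule_prod, finrank_submodule_prod, finrank_so_s5, finrank_sp]

/-- The quaternionic matrix by which `(X, s) ∈ 𝔰𝔬(m) × Im ℍ` acts on `n × m` matrices through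
multiplication on the right. -/
noncomputable def rightMultiplier (m : ℕ) :
    (Matrix (Fin m) (Fin m) ℝ × ℍ[ℝ]) →ₗ[ℝ] Matrix (Fin m) (Fin m) ℍ[ℝ] :=
  (Algebra.linearMap ℝ ℍ[ℝ]).mapMatrix.coprod (scalarAlgHom (Fin m) ℝ).toLinearMap

lemma rightMultiplier_apply {m : ℕ} (X : Matrix (Fin m) (Fin m) ℝ) (s : ℍ[ℝ]) :
    rightMultiplier m (X, s) = X.map (algebraMap ℝ ℍ[ℝ]) + scalar (Fin m) s :=
  rfl

lemma conjTranspose_rightMultiplier {m : ℕ} {X : Matrix (Fin m) (Fin m) ℝ} {s : ℍ[ℝ]}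
    (hX : Xᵀ = -X) (hs : s.re = 0) :
    (rightMultiplier m (X, s))ᴴ = -rightMultiplier m (X, s) := by
  have hX' : (X.map (algebraMap ℝ ℍ[ℝ]))ᴴ = -X.map (algebraMap ℝ ℍ[ℝ]) := by
    ext1 i j
    have hXij : X j i = -X i j := congrFun₂ hX i j
    simp [hXij]
  have hs' : (scalar (Fin m) s)ᴴ = -scalar (Fin m) s := by
    rw [scalar_apply, diagonal_conjTranspose]
    exact (congrArg diagonal (funext fun _ => Quaternion.star_eq_neg.2 hs)).trans
      (diagonal_neg _).symm
  rw [rightMultiplier_apply, conjTranspose_add, hX', hs', neg_add]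

section Stabilizer

variable {m n : ℕ}

/-- The infinitesimal stabilizer of `B`, as a subspace. -/
noncomputable def stabilizer (B : Matrix (Fin n) (Fin m) ℍ[ℝ]) :
    Submodule ℝ (Matrix (Fin m) (Fin m) ℝ × ℍ[ℝ] × Matrix (Fin n) (Fin n) ℍ[ℝ]) :=
  skewTriple m n (skewAdjoint.submodule ℝ ℍ[ℝ]) ⊓
    LinearMap.eqLocus (mulRightLinearMap (Fin n) ℝ B ∘ₗ LinearMap.snd ℝ _ _ ∘ₗ LinearMap.snd ℝ _ _)
      (mulLeftLinearMap (Fin m) ℝ B ∘ₗ rightMultiplier m ∘ₗ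
        LinearMap.prodMap LinearMap.id (LinearMap.fst ℝ _ _))

variable {B : Matrix (Fin n) (Fin m) ℍ[ℝ]} {X : Matrix (Fin m) (Fin m) ℝ} {s : ℍ[ℝ]}
  {Y : Matrix (Fin n) (Fin n) ℍ[ℝ]}

lemma mem_stabilizer :
    (X, s, Y) ∈ stabilizer B ↔
      Xᵀ = -X ∧ s.re = 0 ∧ Yᴴ = -Y ∧ Y * B = B * rightMultiplier m (X, s) := by
  rw [← mem_skewAdjoint_quaternion, stabilizer, Submodule.mem_inf, mem_skewTriple, and_assoc,
    and_assoc]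
  rfl

lemma span_stabSet5 (B : Matrix (Fin n) (Fin m) ℍ[ℝ]) :
    Submodule.span ℝ (stabSet5 B) = stabilizer B := by
  rw [← Submodule.span_eq (stabilizer B)]
  congr 1
  ext ⟨X, s, Y⟩
  have hs : B.map (fun q => q * s) = B * scalar (Fin m) s := by ext1; simp
  rw [SetLike.mem_coe, mem_stabilizer, rightMultiplier_apply, Matrix.mul_add, ← hs,
    ← sub_eq_iff_eq_add']
  rfl

lemma commute_conjTranspose_mul_self_rightMultiplier (h : (X, s, Y) ∈ stabilizer B) :
    Commute (Bᴴ * B) (rightMultiplier m (X, s)) := by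
  obtain ⟨hX, hs, hY, hB⟩ := mem_stabilizer.1 h
  exact commute_conjTranspose_mul_self hY (conjTranspose_rightMultiplier hX hs) hB

end Stabilizer

section RealGram

variable {m n : ℕ}

/-- The Gram matrix of the columns of `B` for the real inner product of `ℍⁿ`. -/
noncomputable def realGram (B : Matrix (Fin n) (Fin m) ℍ[ℝ]) : Matrix (Fin m) (Fin m) ℝ :=
  (Bᴴ * B).map quaternionRe

lemma realGram_apply (B : Matrix (Fin n) (Fin m) ℍ[ℝ]) (i j : Fin m) :
    realGram B i j = ∑ a, (star (B a i) * B a j).re := by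
  simp only [realGram, map_apply, mul_apply, conjTranspose_apply, map_sum, quaternionRe_apply]

lemma realGram_self (B : Matrix (Fin n) (Fin m) ℍ[ℝ]) (j : Fin m) :
    realGram B j j = ∑ a, normSq (B a j) := by
  rw [realGram_apply]
  exact Finset.sum_congr rfl fun a _ => by rw [Quaternion.star_mul_self, Quaternion.re_coe]

lemma realGram_self_eq_zero {B : Matrix (Fin n) (Fin m) ℍ[ℝ]} {j : Fin m} :
    realGram B j j = 0 ↔ ∀ a, B a j = 0 := by
  rw [realGram_self, Finset.sum_eq_zero_iff_of_nonneg fun _ _ => Quaternion.normSq_nonneg]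
  simp only [Finset.mem_univ, forall_const, Quaternion.normSq_eq_zero]

lemma isDiag_realGram {B : Matrix (Fin n) (Fin m) ℍ[ℝ]}
    (hB : ∀ a i j, i ≠ j → (star (B a i) * B a j).re = 0) : (realGram B).IsDiag :=
  fun i j hij => (realGram_apply B i j).trans (Finset.sum_eq_zero fun a _ => hB a i j hij)

lemma eq_zero_of_conjTranspose_mul_self_eq_zero {B : Matrix (Fin n) (Fin m) ℍ[ℝ]}
    (h : Bᴴ * B = 0) : B = 0 := by
  ext1 a j
  exact realGram_self_eq_zero.1 (congrArg (·.re) (congrFun₂ h j j)) a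

lemma map_re_mul_map_algebraMap (H : Matrix (Fin m) (Fin m) ℍ[ℝ]) (X : Matrix (Fin m) (Fin m) ℝ) :
    (H * X.map (algebraMap ℝ ℍ[ℝ])).map quaternionRe = H.map quaternionRe * X := by
  ext1 i j
  simp [mul_apply, quaternionRe_apply]

lemma map_re_map_algebraMap_mul (X : Matrix (Fin m) (Fin m) ℝ) (H : Matrix (Fin m) (Fin m) ℍ[ℝ]) :
    (X.map (algebraMap ℝ ℍ[ℝ]) * H).map quaternionRe = X * H.map quaternionRe := by
  ext1 i j
  simp [mul_apply, quaternionRe_apply]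

lemma commute_realGram {B : Matrix (Fin n) (Fin m) ℍ[ℝ]} {X : Matrix (Fin m) (Fin m) ℝ} {s : ℍ[ℝ]}
    {Y : Matrix (Fin n) (Fin n) ℍ[ℝ]} (h : (X, s, Y) ∈ stabilizer B) :
    Commute (realGram B) X := by
  have hH := (commute_conjTranspose_mul_self_rightMultiplier h).eq
  rw [rightMultiplier_apply, Matrix.mul_add, Matrix.add_mul] at hH
  have hs : (Bᴴ * B * scalar (Fin m) s).map quaternionRe =
      (scalar (Fin m) s * (Bᴴ * B)).map quaternionRe := by
    ext1 i j
    simp only [scalar_apply, map_apply, mul_diagonal, diagonal_mul, quaternionRe_apply,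
      Quaternion.re_mul]
    ring
  have hX : (Bᴴ * B * X.map (algebraMap ℝ ℍ[ℝ])).map quaternionRe =
      (X.map (algebraMap ℝ ℍ[ℝ]) * (Bᴴ * B)).map quaternionRe := by
    have hre := congrArg (·.map quaternionRe) hH
    rw [Matrix.map_add quaternionRe (map_add quaternionRe),
      Matrix.map_add quaternionRe (map_add quaternionRe), hs] at hre
    exact add_right_cancel hre
  rwa [map_re_mul_map_algebraMap, map_re_map_algebraMap_mul] at hX

end RealGram

section LowerBound

variable {m n : ℕ}

/-- The projection of a triple `(X, s, Y)` to its `𝔰𝔭(1)`-component `s`; its kernel inside the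
stabilizer is the stabilizer for `SO(m) × Sp(n)`. -/
noncomputable def scalarPart (m n : ℕ) :
    (Matrix (Fin m) (Fin m) ℝ × ℍ[ℝ] × Matrix (Fin n) (Fin n) ℍ[ℝ]) →ₗ[ℝ] ℍ[ℝ] :=
  LinearMap.fst ℝ _ _ ∘ₗ LinearMap.snd ℝ _ _

lemma exists_real_rows_orthogonal (B : Matrix (Fin n) (Fin m) ℍ[ℝ]) :
    ∃ (V : Matrix (Fin (m - 4 * n)) (Fin m) ℝ) (W : Matrix (Fin m) (Fin (m - 4 * n)) ℝ),
      V * W = 1 ∧ B * Vᵀ.map (algebraMap ℝ ℍ[ℝ]) = 0 := by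
  let f : (Fin m → ℝ) →ₗ[ℝ] Fin n → ℍ[ℝ] :=
    (mulVecBilin ℝ ℝ B) ∘ₗ (Algebra.linearMap ℝ ℍ[ℝ]).compLeft (Fin m)
  have hrank : m - 4 * n ≤ Module.finrank ℝ (LinearMap.ker f) := by
    have h := finrank_sub_finrank_le_finrank_ker f
    rwa [Module.finrank_fin_fun, Module.finrank_pi_fintype, Fin.sum_const,
      Quaternion.finrank_eq_four, smul_eq_mul, mul_comm] at h
  obtain ⟨V, W, hV, hVW⟩ := exists_rows_mem_of_le_finrank _ hrank
  refine ⟨V, W, hVW, ?_⟩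
  ext1 a i
  exact congrFun (hV i) a

lemma exists_left_annihilator (B : Matrix (Fin n) (Fin m) ℍ[ℝ]) :
    ∃ (V : Matrix (Fin (n - m)) (Fin n) ℍ[ℝ]) (W : Matrix (Fin n) (Fin (n - m)) ℍ[ℝ]),
      V * W = 1 ∧ V * B = 0 := by
  have hrank : n - m ≤ Module.finrank ℍ[ℝ] (LinearMap.ker B.vecMulLinear) := by
    have h := finrank_sub_finrank_le_finrank_ker B.vecMulLinear
    rwa [Module.finrank_fin_fun, Module.finrank_fin_fun] at h
  obtain ⟨V, W, hV, hVW⟩ := exists_rows_mem_of_le_finrank _ hrank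
  exact ⟨V, W, hVW, funext hV⟩

lemma le_finrank_stabilizer_inf_ker_scalarPart (B : Matrix (Fin n) (Fin m) ℍ[ℝ]) :
    (m - 4 * n) * (m - 4 * n - 1) / 2 + (n - m) * (2 * (n - m) + 1) ≤
      Module.finrank ℝ ↥(stabilizer B ⊓ LinearMap.ker (scalarPart m n)) := by
  obtain ⟨V₁, W₁, hVW₁, hB₁⟩ := exists_real_rows_orthogonal B
  obtain ⟨V₂, W₂, hVW₂, hB₂⟩ := exists_left_annihilator B
  let f := (mulRightLinearMap (Fin m) ℝ V₁ ∘ₗ mulLeftLinearMap (Fin (m - 4 * n)) ℝ V₁ᴴ).prodMap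
    ((LinearMap.id (R := ℝ) (M := ℍ[ℝ])).prodMap
      (mulRightLinearMap (Fin n) ℝ V₂ ∘ₗ mulLeftLinearMap (Fin (n - m)) ℝ V₂ᴴ))
  have hf (A s C) : f (A, s, C) = (V₁ᴴ * A * V₁, s, V₂ᴴ * C * V₂) := rfl
  have hrank := finrank_le_finrank_of_mapsTo f (S := skewTriple (m - 4 * n) (n - m) ⊥)
    (T := stabilizer B ⊓ LinearMap.ker (scalarPart m n)) ?_ ?_
  · rwa [finrank_skewTriple, finrank_bot, zero_add] at hrank
  · rintro ⟨A, s, C⟩ hp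
    obtain ⟨hA, rfl : s = 0, hC⟩ := mem_skewTriple.1 hp
    rw [hf]
    refine ⟨mem_stabilizer.2 ⟨?_, rfl, ?_, ?_⟩, rfl⟩
    · simp [Matrix.mul_assoc, hA]
    · simp [Matrix.mul_assoc, hC]
    · have hright : B * rightMultiplier m (V₁ᴴ * A * V₁, 0) = 0 := by
        rw [rightMultiplier_apply, map_zero, add_zero, Matrix.map_mul, Matrix.map_mul,
          ← Matrix.mul_assoc, ← Matrix.mul_assoc, conjTranspose_eq_transpose_of_trivial, hB₁,
          Matrix.zero_mul, Matrix.zero_mul]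
      calc V₂ᴴ * C * V₂ * B = V₂ᴴ * C * (V₂ * B) := Matrix.mul_assoc _ _ _
        _ = B * rightMultiplier m (V₁ᴴ * A * V₁, 0) := by rw [hB₂, Matrix.mul_zero, hright]
  · rintro ⟨A, s, C⟩ - h
    rw [hf, Prod.mk_eq_zero, Prod.mk_eq_zero] at h
    obtain ⟨hA, hs, hC⟩ := h
    refine Prod.mk_eq_zero.2 ⟨?_, Prod.mk_eq_zero.2 ⟨hs, ?_⟩⟩
    · exact injective_conjTranspose_mul_mul hVW₁ (by simpa using hA)
    · exact injective_conjTranspose_mul_mul hVW₂ (by simpa using hC)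

lemma exists_isHermitian_mul_eq_self (B : Matrix (Fin n) (Fin m) ℍ[ℝ]) :
    ∃ Q : Matrix (Fin m) (Fin m) ℍ[ℝ], (B * Q * Bᴴ).IsHermitian ∧ B * Q * Bᴴ * B = B := by
  obtain ⟨Q, hQ⟩ := exists_mul_mul_eq_self (Bᴴ * B)
  have hB : B * Q * Bᴴ * B = B := by
    refine sub_eq_zero.1 (eq_zero_of_conjTranspose_mul_self_eq_zero ?_)
    have hN : B * Q * Bᴴ * B - B = B * (Q * (Bᴴ * B) - 1) := by
      simp only [Matrix.mul_sub, Matrix.mul_assoc, Matrix.mul_one]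
    have hBN : Bᴴ * (B * (Q * (Bᴴ * B) - 1)) = 0 := by
      rw [← Matrix.mul_assoc, Matrix.mul_sub, ← Matrix.mul_assoc, hQ, Matrix.mul_one, sub_self]
    rw [hN, conjTranspose_mul, Matrix.mul_assoc, hBN, Matrix.mul_zero]
  refine ⟨Q, ?_, hB⟩
  -- `P = B * Q * Bᴴ` fixes `B`, hence also `Pᴴ`, whose columns lie in the span of those of `B`.
  have hP : (B * Q * Bᴴ)ᴴ = B * Q * Bᴴ * (B * Q * Bᴴ)ᴴ := by
    calc (B * Q * Bᴴ)ᴴ = B * Q * Bᴴ * B * (Qᴴ * Bᴴ) := by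
          rw [hB]; simp only [conjTranspose_mul, conjTranspose_conjTranspose, Matrix.mul_assoc]
      _ = B * Q * Bᴴ * (B * Q * Bᴴ)ᴴ := by
          simp only [conjTranspose_mul, conjTranspose_conjTranspose, Matrix.mul_assoc]
  rw [← isHermitian_conjTranspose_iff, hP]
  exact isHermitian_mul_conjTranspose_self _

lemma exists_mem_stabilizer_of_commute {B : Matrix (Fin n) (Fin m) ℍ[ℝ]} {s : ℍ[ℝ]}
    (hs : s.re = 0) (hcomm : Commute (Bᴴ * B) (scalar (Fin m) s)) :
    ∃ Y, ((0, s, Y) : Matrix (Fin m) (Fin m) ℝ × ℍ[ℝ] × Matrix (Fin n) (Fin n) ℍ[ℝ]) ∈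
      stabilizer B := by
  obtain ⟨Q, hP, hPB⟩ := exists_isHermitian_mul_eq_self B
  have hmul : rightMultiplier m (0, s) = scalar (Fin m) s := by
    rw [rightMultiplier_apply, Matrix.map_zero _ (map_zero _), zero_add]
  have hS : (scalar (Fin m) s)ᴴ = -scalar (Fin m) s :=
    hmul ▸ conjTranspose_rightMultiplier (by simp) hs
  set S := scalar (Fin m) s
  have hBP : Bᴴ * (B * Q * Bᴴ) = Bᴴ := by
    have := congrArg conjTranspose hPB
    rwa [conjTranspose_mul, hP.eq] at this
  -- On the column space of `B` this is `B *ᵥ v ↦ B *ᵥ (S *ᵥ v)`; it vanishes on the orthogonal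
  -- complement.
  refine ⟨B * Q * S * Bᴴ, mem_stabilizer.2 ⟨by simp, hs, ?_, ?_⟩⟩
  · calc (B * Q * S * Bᴴ)ᴴ = -(B * S * (Qᴴ * Bᴴ)) := by
          simp only [conjTranspose_mul, conjTranspose_conjTranspose, hS, Matrix.mul_assoc,
            Matrix.neg_mul, Matrix.mul_neg]
      _ = -(B * Q * (Bᴴ * B * S) * (Qᴴ * Bᴴ)) := by
          rw [← Matrix.mul_assoc (B * Q), ← Matrix.mul_assoc (B * Q), hPB]
      _ = -(B * Q * S * (Bᴴ * (B * Q * Bᴴ)ᴴ)) := by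
          rw [hcomm.eq]
          simp only [conjTranspose_mul, conjTranspose_conjTranspose, Matrix.mul_assoc]
      _ = -(B * Q * S * Bᴴ) := by rw [hP.eq, hBP]
  · calc B * Q * S * Bᴴ * B = B * Q * (S * (Bᴴ * B)) := by simp only [Matrix.mul_assoc]
      _ = B * Q * Bᴴ * B * S := by rw [← hcomm.eq]; simp only [Matrix.mul_assoc]
      _ = B * rightMultiplier m (0, s) := by rw [hPB, hmul]

lemma exists_commute_quaternion (q : ℍ[ℝ]) : ∃ s : ℍ[ℝ], s ≠ 0 ∧ s.re = 0 ∧ Commute q s := by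
  rcases eq_or_ne q.im 0 with hq | hq
  · refine ⟨quaternionUnit 1, quaternionUnit_ne_zero 1, rfl, ?_⟩
    rw [← q.re_add_im, hq, add_zero]
    exact Quaternion.coe_commutes _ _
  · refine ⟨q.im, hq, Quaternion.re_im q, ?_⟩
    conv_lhs => rw [← q.re_add_im]
    exact (Quaternion.coe_commute _ _).add_left (Commute.refl _)

lemma exists_commute_conjTranspose_mul_self (B : Matrix (Fin n) (Fin 2) ℍ[ℝ]) :
    ∃ s : ℍ[ℝ], s ≠ 0 ∧ s.re = 0 ∧ Commute (Bᴴ * B) (scalar (Fin 2) s) := by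
  obtain ⟨s, hs, hre, hcomm⟩ := exists_commute_quaternion ((Bᴴ * B) 0 1)
  refine ⟨s, hs, hre, (scalar_commute_iff.2 ?_).symm⟩
  have hstar (i j : Fin 2) : star ((Bᴴ * B) i j) = (Bᴴ * B) j i :=
    (isHermitian_conjTranspose_mul_self B).apply j i
  have hdiag (i : Fin 2) : Commute ((Bᴴ * B) i i) s := by
    rw [Quaternion.star_eq_self.1 (hstar i i)]
    exact Quaternion.coe_commute _ _
  have hcomm' : Commute ((Bᴴ * B) 1 0) s := by
    have := hcomm.star_star
    rwa [hstar, Quaternion.star_eq_neg.2 hre, Commute.neg_right_iff] at this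
  ext1 i j
  fin_cases i <;> fin_cases j
  exacts [(hdiag 0).eq.symm, hcomm.eq.symm, hcomm'.eq.symm, (hdiag 1).eq.symm]

lemma le_finrank_stabilizer (B : Matrix (Fin n) (Fin m) ℍ[ℝ]) :
    (m - 4 * n) * (m - 4 * n - 1) / 2 + (if m = 2 then 1 else 0) +
      (n - m) * (2 * (n - m) + 1) ≤ Module.finrank ℝ (stabilizer B) := by
  have hker := le_finrank_stabilizer_inf_ker_scalarPart B
  split_ifs with hm
  · subst hm
    obtain ⟨s, hs, hre, hcomm⟩ := exists_commute_conjTranspose_mul_self B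
    obtain ⟨Y, hY⟩ := exists_mem_stabilizer_of_commute hre hcomm
    have hlt : stabilizer B ⊓ LinearMap.ker (scalarPart 2 n) < stabilizer B :=
      inf_lt_left.2 fun hle => hs (hle hY)
    have := Submodule.finrank_lt_finrank_of_lt hlt
    omega
  · have := Submodule.finrank_mono (inf_le_left : stabilizer B ⊓ LinearMap.ker (scalarPart m n) ≤ _)
    omega

end LowerBound

section Rescaling

variable {m n : ℕ} {B V : Matrix (Fin n) (Fin m) ℍ[ℝ]} {X : Matrix (Fin m) (Fin m) ℝ} {s : ℍ[ℝ]}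
  {Y : Matrix (Fin n) (Fin n) ℍ[ℝ]}

lemma apply_eq_zero_of_mem_stabilizer (hB : (realGram B).IsDiag) (h : (X, s, Y) ∈ stabilizer B)
    {i j : Fin m} (hij : i ≠ j → realGram B i i ≠ realGram B j j) : X i j = 0 := by
  rcases eq_or_ne i j with rfl | hne
  · exact self_eq_neg.1 (congrFun₂ (mem_stabilizer.1 h).1 i i)
  · have hcomm := congrFun₂ (commute_realGram h).eq i j
    rw [← hB.diagonal_diag, diagonal_mul, mul_diagonal, mul_comm] at hcomm
    exact (mul_eq_mul_left_iff.1 hcomm).resolve_left (hij hne)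

lemma exists_scaling_separating {N : Fin m → ℝ} (hN : ∀ l, 0 ≤ N l) :
    ∃ w : Fin m → ℝ, (∀ l, w l ≠ 0) ∧
      ∀ i j, i ≠ j → N i ≠ 0 → w i ^ 2 * N i ≠ w j ^ 2 * N j := by
  have hw (l : Fin m) : ∃ w : ℝ, w ≠ 0 ∧ w ^ 2 * N l = if N l = 0 then 0 else (l : ℝ) + 1 := by
    rcases (hN l).eq_or_lt' with h | h
    · exact ⟨1, one_ne_zero, by simp [h]⟩
    · have hpos : 0 < ((l : ℝ) + 1) / N l := by positivity
      refine ⟨√(((l : ℝ) + 1) / N l), (Real.sqrt_pos.2 hpos).ne', ?_⟩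
      rw [Real.sq_sqrt hpos.le, div_mul_cancel₀ _ h.ne', if_neg h.ne']
  choose w hw0 hw using hw
  refine ⟨w, hw0, fun i j hij hi => ?_⟩
  rw [hw, hw, if_neg hi]
  split_ifs
  · positivity
  · simpa [Fin.val_inj] using hij

lemma realGram_mul_diagonal (V : Matrix (Fin n) (Fin m) ℍ[ℝ]) (w : Fin m → ℝ) (i j : Fin m) :
    realGram (V * diagonal fun l => (w l : ℍ[ℝ])) i j = w i * w j * realGram V i j := by
  rw [realGram_apply, realGram_apply, Finset.mul_sum]
  refine Finset.sum_congr rfl fun a _ => ?_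
  rw [mul_diagonal, mul_diagonal, star_mul, Quaternion.star_coe, Quaternion.mul_coe_eq_smul,
    Quaternion.coe_mul_eq_smul, smul_mul_smul_comm, Quaternion.re_smul, smul_eq_mul]

lemma exists_rescaling (hV : (realGram V).IsDiag) :
    ∃ B : Matrix (Fin n) (Fin m) ℍ[ℝ], ∀ X s Y, (X, s, Y) ∈ stabilizer B →
      (∀ i j, (∃ a, V a i ≠ 0) → X i j = 0) ∧ Y * V = V * scalar (Fin m) s := by
  have hnonneg (l : Fin m) : 0 ≤ realGram V l l := by
    rw [realGram_self]
    exact Finset.sum_nonneg fun _ _ => Quaternion.normSq_nonneg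
  obtain ⟨w, hw0, hw⟩ := exists_scaling_separating hnonneg
  set D : Matrix (Fin m) (Fin m) ℍ[ℝ] := diagonal fun l => (w l : ℍ[ℝ]) with hD
  have hdiag : (realGram (V * D)).IsDiag := fun i j hij => by
    change realGram (V * D) i j = 0
    rw [hD, realGram_mul_diagonal, hV hij, mul_zero]
  refine ⟨V * D, fun X s Y h => ?_⟩
  have hX (i j : Fin m) (hi : ∃ a, V a i ≠ 0) : X i j = 0 := by
    refine apply_eq_zero_of_mem_stabilizer hdiag h fun hij => ?_
    rw [hD, realGram_mul_diagonal, realGram_mul_diagonal, ← sq, ← sq]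
    refine hw i j hij fun h0 => ?_
    obtain ⟨a, ha⟩ := hi
    exact ha (realGram_self_eq_zero.1 h0 a)
  have hVX : V * D * X.map (algebraMap ℝ ℍ[ℝ]) = 0 := by
    ext1 a j
    rw [mul_apply]
    refine Finset.sum_eq_zero fun i _ => ?_
    by_cases hi : V a i = 0
    · simp [hD, hi]
    · simp [hX i j ⟨a, hi⟩]
  refine ⟨hX, ?_⟩
  have hY := (mem_stabilizer.1 h).2.2.2
  rw [rightMultiplier_apply, Matrix.mul_add, hVX, zero_add] at hY
  ext1 a l
  have hal := congrFun₂ hY a l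
  rw [← Matrix.mul_assoc, hD, scalar_apply, mul_diagonal, mul_diagonal, mul_diagonal,
    mul_assoc (V a l), Quaternion.coe_commutes, ← mul_assoc] at hal
  rw [scalar_apply, mul_diagonal]
  exact mul_right_cancel₀ (Quaternion.coe_injective.ne (hw0 l)) hal

end Rescaling

section AdaptedFrame

variable {m n : ℕ}

/-- The columns of `V` are pairwise orthogonal for the real inner product, the first `4 * n` of them
are nonzero, the rows from `m` on vanish, and the columns `l < n` form the identity matrix except
that row `0` is free outside column `0`. For such frames the equation `Y * V = V * scalar s` can be
solved explicitly. -/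
structure IsAdapted (V : Matrix (Fin n) (Fin m) ℍ[ℝ]) : Prop where
  isDiag_realGram : (realGram V).IsDiag
  exists_ne_zero : ∀ l : Fin m, (l : ℕ) < 4 * n → ∃ a, V a l ≠ 0
  apply_eq_zero : ∀ (a : Fin n) l, m ≤ a → V a l = 0
  apply_eq_ite : ∀ (a : Fin n) (l : Fin m), 0 < (a : ℕ) ∨ (l : ℕ) = 0 → (l : ℕ) < n →
    V a l = if (a : ℕ) = l then 1 else 0

namespace IsAdapted

variable {V : Matrix (Fin n) (Fin m) ℍ[ℝ]} {Y : Matrix (Fin n) (Fin n) ℍ[ℝ]} {s : ℍ[ℝ]}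

lemma apply_eq_of_mul_eq (hV : IsAdapted V) (hY : Yᴴ = -Y) (hYV : Y * V = V * scalar (Fin m) s)
    {a b : Fin n} (hb : (b : ℕ) < m) : Y a b = if a = b then s else 0 := by
  have hsum (a : Fin n) (l : Fin m) : ∑ c, Y a c * V c l = V a l * s := by
    have := congrFun₂ hYV a l
    rwa [mul_apply, scalar_apply, mul_diagonal] at this
  have hcol (a b : Fin n) (hb : (b : ℕ) = 0) (hbm : (b : ℕ) < m) :
      Y a b = if a = b then s else 0 := by
    have hVb (c : Fin n) : V c ⟨b, hbm⟩ = if c = b then 1 else 0 := by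
      simp only [hV.apply_eq_ite c ⟨b, hbm⟩ (.inr hb) b.2, Fin.val_inj]
    simpa [hVb] using hsum a ⟨b, hbm⟩
  rcases (b : ℕ).eq_zero_or_pos with hb0 | hb0
  · exact hcol a b hb0 hb
  rcases (a : ℕ).eq_zero_or_pos with ha0 | ha0
  · have hba : b ≠ a := fun h => by omega
    have hskew : star (Y b a) = -Y a b := congrFun₂ hY a b
    rw [hcol b a ha0 (by omega), if_neg hba, star_zero, eq_comm, neg_eq_zero] at hskew
    rw [hskew, if_neg hba.symm]
  have hYV' (c : Fin n) : Y a c * V c ⟨b, hb⟩ = if c = b then Y a c else 0 := by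
    rcases (c : ℕ).eq_zero_or_pos with hc0 | hc0
    · have hac : a ≠ c := fun h => by omega
      rw [hcol a c hc0 (by omega), if_neg hac, zero_mul, ite_self]
    · simp [hV.apply_eq_ite c ⟨b, hb⟩ (.inl hc0) b.2, Fin.ext_iff]
  have hab := hsum a ⟨b, hb⟩
  simpa [hYV', hV.apply_eq_ite a ⟨b, hb⟩ (.inl ha0) b.2, Fin.val_inj] using hab

lemma commute_of_mul_eq (hV : IsAdapted V) (hY : Yᴴ = -Y) (hYV : Y * V = V * scalar (Fin m) s)
    (a : Fin n) (l : Fin m) : Commute s (V a l) := by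
  have hal := congrFun₂ hYV a l
  rw [mul_apply, scalar_apply, mul_diagonal, Finset.sum_eq_single a] at hal
  · rcases lt_or_ge (a : ℕ) m with ha | ha
    · rwa [hV.apply_eq_of_mul_eq hY hYV ha, if_pos rfl] at hal
    · rw [hV.apply_eq_zero a l ha]
      exact Commute.zero_right s
  · intro b _ hba
    rcases lt_or_ge (b : ℕ) m with hb | hb
    · rw [hV.apply_eq_of_mul_eq hY hYV hb, if_neg hba.symm, zero_mul]
    · rw [hV.apply_eq_zero b l hb, mul_zero]
  · simp

end IsAdapted

/-- The indices of `Fin k` from `c` on. -/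
def tailIndex (c k : ℕ) (i : Fin (k - c)) : Fin k := ⟨c + i, by omega⟩

/-- The lower right block of a square matrix obtained by deleting the first `c` rows and columns. -/
def tailBlock {A : Type*} [AddCommGroup A] [Module ℝ A] (c k : ℕ) :
    Matrix (Fin k) (Fin k) A →ₗ[ℝ] Matrix (Fin (k - c)) (Fin (k - c)) A where
  toFun M := M.submatrix (tailIndex c k) (tailIndex c k)
  map_add' _ _ := rfl
  map_smul' _ _ := rfl

lemma eq_zero_of_tailBlock_eq_zero {A : Type*} [AddCommGroup A] [StarAddMonoid A] [Module ℝ A]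
    {c k : ℕ}
    {M : Matrix (Fin k) (Fin k) A} (hM : Mᴴ = -M) (hrow : ∀ i j : Fin k, (i : ℕ) < c → M i j = 0)
    (htail : tailBlock c k M = 0) : M = 0 := by
  ext1 i j
  rcases lt_or_ge (i : ℕ) c with hi | hi
  · exact hrow i j hi
  rcases lt_or_ge (j : ℕ) c with hj | hj
  · have hji : star (M j i) = -M i j := congrFun₂ hM i j
    rwa [hrow j i hj, star_zero, eq_comm, neg_eq_zero] at hji
  have hij := congrFun₂ htail ⟨i - c, by omega⟩ ⟨j - c, by omega⟩
  have htailIndex (i : Fin k) (hi : c ≤ i) : tailIndex c k ⟨i - c, by omega⟩ = i :=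
    Fin.ext (Nat.add_sub_cancel' hi)
  change M (tailIndex c k _) (tailIndex c k _) = 0 at hij
  rwa [htailIndex i hi, htailIndex j hj] at hij

lemma IsAdapted.exists_finrank_stabilizer_le {V : Matrix (Fin n) (Fin m) ℍ[ℝ]} (hV : IsAdapted V)
    {T : Submodule ℝ ℍ[ℝ]} (hT : ∀ s : ℍ[ℝ], s.re = 0 → (∀ a l, Commute s (V a l)) → s ∈ T) :
    ∃ B : Matrix (Fin n) (Fin m) ℍ[ℝ], Module.finrank ℝ (stabilizer B) ≤
      (m - 4 * n) * (m - 4 * n - 1) / 2 +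
        (Module.finrank ℝ T + (n - m) * (2 * (n - m) + 1)) := by
  obtain ⟨B, hB⟩ := exists_rescaling hV.isDiag_realGram
  refine ⟨B, ?_⟩
  rw [← finrank_skewTriple]
  refine finrank_le_finrank_of_mapsTo ((tailBlock (4 * n) m).prodMap
    ((LinearMap.id (R := ℝ) (M := ℍ[ℝ])).prodMap (tailBlock m n))) ?_ ?_
  · rintro ⟨X, s, Y⟩ h
    obtain ⟨hX, hs, hY, -⟩ := mem_stabilizer.1 h
    refine mem_skewTriple.2 ⟨?_, hT s hs (hV.commute_of_mul_eq hY (hB X s Y h).2), ?_⟩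
    · exact congrArg (tailBlock (4 * n) m) hX
    · exact congrArg (tailBlock m n) hY
  · rintro ⟨X, s, Y⟩ h h0
    obtain ⟨hX, -, hY, -⟩ := mem_stabilizer.1 h
    obtain ⟨hXV, hYV⟩ := hB X s Y h
    obtain ⟨hX0, hs0 : s = 0, hY0⟩ := by simpa only [Prod.ext_iff] using h0
    have hYcol {a b : Fin n} (hb : (b : ℕ) < m) : Y a b = 0 := by
      rw [hV.apply_eq_of_mul_eq hY hYV hb, hs0, ite_self]
    refine Prod.mk_eq_zero.2 ⟨?_, Prod.mk_eq_zero.2 ⟨hs0, ?_⟩⟩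
    · exact eq_zero_of_tailBlock_eq_zero hX
        (fun i j hi => hXV i j (hV.exists_ne_zero i hi)) hX0
    · refine eq_zero_of_tailBlock_eq_zero hY (fun a b ha => ?_) hY0
      have hab : star (Y b a) = -Y a b := congrFun₂ hY a b
      rwa [hYcol ha, star_zero, eq_comm, neg_eq_zero] at hab

/-- The row and the unit of the nonzero entry in column `l` of `wideFrame`. -/
def wideIndex (n l : ℕ) : ℕ × Fin 4 :=
  if l < n then (l, 0) else ((l - n) / 3, ⟨1 + (l - n) % 3, by omega⟩)

lemma wideIndex_of_lt {l : ℕ} (hl : l < n) : wideIndex n l = (l, 0) := if_pos hl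

lemma wideIndex_injective (n : ℕ) : Function.Injective (wideIndex n) := by
  intro l l' h
  unfold wideIndex at h
  split_ifs at h <;> simp only [Prod.ext_iff, Fin.ext_iff, Fin.val_zero] at h <;> omega

lemma wideIndex_fst_lt {l : ℕ} (hl : l < 4 * n) : (wideIndex n l).1 < n := by
  unfold wideIndex
  split_ifs <;> dsimp only <;> omega

/-- A frame adapted for `n + 2 ≤ m`: after the identity matrix come the columns
`i e₀, j e₀, k e₀, i e₁, …`, followed by zero columns. -/
noncomputable def wideFrame (n m : ℕ) : Matrix (Fin n) (Fin m) ℍ[ℝ] :=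
  of fun a l => if (a : ℕ) = (wideIndex n l).1 then quaternionUnit (wideIndex n l).2 else 0

lemma isAdapted_wideFrame (hnm : n ≤ m) : IsAdapted (wideFrame n m) where
  isDiag_realGram := isDiag_realGram fun a l l' hll => by
    simp only [wideFrame, of_apply]
    split_ifs with h h'
    · rw [re_star_mul_quaternionUnit, if_neg fun hunit => hll ?_]
      exact Fin.ext (wideIndex_injective n (Prod.ext (h.symm.trans h') hunit))
    all_goals simp
  exists_ne_zero l hl :=
    ⟨⟨_, wideIndex_fst_lt hl⟩, by simp [wideFrame, quaternionUnit_ne_zero]⟩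
  apply_eq_zero a l ha := by omega
  apply_eq_ite a l _ hl := by simp [wideFrame, wideIndex_of_lt hl, quaternionUnit_zero]

/-- A frame adapted for `m ≤ n + 1`: the identity matrix, with row `0` changed to
`(1, i, 0, …, 0, j)`. -/
noncomputable def tallFrame (n m : ℕ) : Matrix (Fin n) (Fin m) ℍ[ℝ] :=
  of fun a l =>
    if (a : ℕ) = 0 then
      if (l : ℕ) = 0 then 1
      else if (l : ℕ) = 1 then quaternionUnit 1
      else if (l : ℕ) = m - 1 then quaternionUnit 2
      else 0
    else if (a : ℕ) = l then 1 else 0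

lemma isAdapted_tallFrame (hn : 1 ≤ n) (hnm : m ≤ n + 1) : IsAdapted (tallFrame n m) where
  isDiag_realGram := isDiag_realGram fun a l l' hll => by
    have hne : (l : ℕ) ≠ l' := Fin.val_ne_of_ne hll
    simp only [tallFrame, of_apply, ← quaternionUnit_zero]
    split_ifs <;> first | omega | simp
  exists_ne_zero l hl := by
    rcases lt_or_ge (l : ℕ) n with hln | hln
    · refine ⟨⟨l, hln⟩, ?_⟩
      simp +contextual [tallFrame]
    · have hl1 : (l : ℕ) = m - 1 := by omega
      refine ⟨⟨0, hn⟩, ?_⟩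
      simp only [tallFrame, of_apply, hl1, if_true]
      split_ifs <;> first | omega | exact quaternionUnit_ne_zero _
  apply_eq_zero a l ha := by
    have hal : (a : ℕ) ≠ l := by omega
    have ha0 : (a : ℕ) ≠ 0 := by omega
    simp [tallFrame, hal, ha0]
  apply_eq_ite a l hal _ := by
    simp only [tallFrame, of_apply]
    split_ifs <;> first | rfl | omega

lemma exists_isAdapted (hm : 2 ≤ m) (hn : 1 ≤ n) :
    ∃ V : Matrix (Fin n) (Fin m) ℍ[ℝ], IsAdapted V ∧ (∃ a l, V a l = quaternionUnit 1) ∧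
      (3 ≤ m → ∃ a l, V a l = quaternionUnit 2) := by
  rcases le_or_gt m (n + 1) with hnm | hnm
  · refine ⟨tallFrame n m, isAdapted_tallFrame hn hnm, ⟨⟨0, hn⟩, ⟨1, hm⟩, ?_⟩,
      fun hm3 => ⟨⟨0, hn⟩, ⟨m - 1, by omega⟩, ?_⟩⟩
    · simp [tallFrame]
    · have h0 : m - 1 ≠ 0 := by omega
      have h1 : m - 1 ≠ 1 := by omega
      simp [tallFrame, h0, h1]
  · refine ⟨wideFrame n m, isAdapted_wideFrame (by omega), ⟨⟨0, hn⟩, ⟨n, by omega⟩, ?_⟩,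
      fun _ => ⟨⟨0, hn⟩, ⟨n + 1, hnm⟩, ?_⟩⟩
    · simp [wideFrame, wideIndex]
    · simp [wideFrame, wideIndex]

end AdaptedFrame

lemma exists_finrank_stabilizer_le {m n : ℕ} (hm : 2 ≤ m) (hn : 1 ≤ n) :
    ∃ B : Matrix (Fin n) (Fin m) ℍ[ℝ], Module.finrank ℝ (stabilizer B) ≤
      (m - 4 * n) * (m - 4 * n - 1) / 2 + (if m = 2 then 1 else 0) +
        (n - m) * (2 * (n - m) + 1) := by
  obtain ⟨V, hV, ⟨a, l, hi⟩, hj⟩ := exists_isAdapted hm hn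
  have hcommi {s : ℍ[ℝ]} (hs : ∀ a l, Commute s (V a l)) : s.imJ = 0 ∧ s.imK = 0 :=
    im_eq_zero_of_commute_quaternionUnit_one (hi ▸ hs a l)
  split_ifs with hm2
  · have hT (s : ℍ[ℝ]) (hre : s.re = 0) (hs : ∀ a l, Commute s (V a l)) :
        s ∈ ℝ ∙ quaternionUnit 1 := by
      obtain ⟨hJ, hK⟩ := hcommi hs
      refine Submodule.mem_span_singleton.2 ⟨s.imI, ?_⟩
      ext <;> simp [hre, hJ, hK]
    have hB := hV.exists_finrank_stabilizer_le hT
    rwa [finrank_span_singleton (quaternionUnit_ne_zero 1), ← add_assoc] at hB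
  · obtain ⟨a', l', hj⟩ := hj (by omega)
    have hT (s : ℍ[ℝ]) (hre : s.re = 0) (hs : ∀ a l, Commute s (V a l)) :
        s ∈ (⊥ : Submodule ℝ ℍ[ℝ]) := by
      obtain ⟨hJ, hK⟩ := hcommi hs
      obtain ⟨hI, -⟩ := im_eq_zero_of_commute_quaternionUnit_two (hj ▸ hs a' l')
      exact (Submodule.mem_bot ℝ).2 (Quaternion.ext s 0 hre hI hJ hK)
    have hB := hV.exists_finrank_stabilizer_le hT
    rwa [finrank_bot, ← add_assoc] at hB

theorem isLeast_finrank_span_stabSet5 {m n : ℕ} (hm : 2 ≤ m) (hn : 1 ≤ n) :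
    IsLeast {d : ℕ | ∃ B : Matrix (Fin n) (Fin m) (Quaternion ℝ),
        d = Module.finrank ℝ (Submodule.span ℝ (stabSet5 B))}
      ((m - 4 * n) * (m - 4 * n - 1) / 2 + (if m = 2 then 1 else 0) +
        (n - m) * (2 * (n - m) + 1)) := by
  obtain ⟨B, hB⟩ := exists_finrank_stabilizer_le hm hn
  refine ⟨⟨B, ?_⟩, ?_⟩
  · rw [span_stabSet5]
    exact (le_finrank_stabilizer B).antisymm hB
  · rintro _ ⟨B, rfl⟩
    rw [span_stabSet5]
    exact le_finrank_stabilizer B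

theorem stmt5 (m n : ℕ) (hm : 2 ≤ m) (hn : 1 ≤ n) :
    (3 ≤ m →
      IsLeast {d : ℕ | ∃ B : Matrix (Fin n) (Fin m) (Quaternion ℝ),
          d = Module.finrank ℝ (Submodule.span ℝ (stabSet5 B))}
        (if 4 * n + 1 < m then (m - 4 * n) * (m - 4 * n - 1) / 2
         else if m < n then (n - m) * (2 * (n - m) + 1) else 0)) ∧
    (m = 2 → 2 ≤ n →
      IsLeast {d : ℕ | ∃ B : Matrix (Fin n) (Fin m) (Quaternion ℝ),
          d = Module.finrank ℝ (Submodule.span ℝ (stabSet5 B))}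
        (1 + (n - 2) * (2 * (n - 2) + 1))) := by
  have hleast := isLeast_finrank_span_stabSet5 hm hn
  constructor
  · intro hm3
    convert hleast using 1
    rw [if_neg (by omega : m ≠ 2), add_zero]
    split_ifs with hwide htall
    · rw [Nat.sub_eq_zero_of_le (by omega : n ≤ m), zero_mul, add_zero]
    · rw [Nat.sub_eq_zero_of_le (by omega : m ≤ 4 * n), zero_mul, Nat.zero_div, zero_add]
    · rw [Nat.sub_eq_zero_of_le (by omega : n ≤ m)]
      have : m - 4 * n ≤ 1 := by omega
      interval_cases m - 4 * n <;> rfl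
  · rintro rfl hn2
    convert hleast using 1
    rw [Nat.sub_eq_zero_of_le (by omega : 2 ≤ 4 * n), if_pos rfl, zero_mul, Nat.zero_div, zero_add]
end
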